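/- arXiv:1209.4945 — 3 statements merged into one kernel-verified Lean document; each statement's English description precedes it below -/
import Mathlib

section
/- Let χ be an extreme unipotent trace of A(GLB), normalized so that χ(I_B) = 1. Then for every n, m ≥ 1 and every a ∈ GL(n,q), b ∈ GL(m,q) whose characteristic polynomials are coprime, one has χ([e_{a⊙b}]) = χ([e_a])·χ([e_b]), where a⊙b ∈ GL(n+m,q) is the block-diagonal matrix with diagonal blocks a and b. (Multiplicativity theorem for unipotent traces, Theorem 3.3.) -/
/-!
STATEMENT 0 (Theorem 3.3, multiplicativity of extreme unipotent traces of A(GLB)).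
-/

open scoped ComplexOrder

variable (F : Type) [Field F] [Fintype F] [DecidableEq F]

/-- `GL(n,q)`, the group of invertible `n × n` matrices over the finite field `F` (`q = |F|`). -/
abbrev GLn (n : ℕ) := GL (Fin n) F

/-- The complex group algebra `ℂ[GL(n,q)]`. -/
abbrev GA (n : ℕ) := MonoidAlgebra ℂ (GLn F n)

/-- `b` is an invertible upper-triangular matrix, i.e. an element of the Borel subgroup `B_n`. -/
def IsUT {n : ℕ} (b : GLn F n) : Prop :=
  ∀ i j : Fin n, j < i → (b : Matrix (Fin n) (Fin n) F) i j = 0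

open scoped Classical in
/-- `Ext(g)`: the set of `h ∈ GL(n+1,q)` whose top-left `n × n` corner is `g` and whose last
row vanishes except possibly at the `(n+1,n+1)` entry. -/
noncomputable def ExtSet {n : ℕ} (g : GLn F n) : Finset (GLn F (n + 1)) :=
  Finset.univ.filter (fun h =>
    (∀ i j : Fin n, (h : Matrix (Fin (n + 1)) (Fin (n + 1)) F) i.castSucc j.castSucc
        = (g : Matrix (Fin n) (Fin n) F) i j) ∧
    (∀ j : Fin n, (h : Matrix (Fin (n + 1)) (Fin (n + 1)) F) (Fin.last n) j.castSucc = 0))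

/-- The parabolic embedding `i_n : ℂ[GL(n,q)] → ℂ[GL(n+1,q)]`,
`e_g ↦ (1/((q-1)q^n)) ∑_{h ∈ Ext(g)} e_h`. -/
noncomputable def paraEmb (n : ℕ) : GA F n →ₗ[ℂ] GA F (n + 1) :=
  (Finsupp.lsum ℂ (fun g => LinearMap.toSpanSingleton ℂ (GA F (n + 1))
    ((((Fintype.card F : ℂ) - 1) * (Fintype.card F : ℂ) ^ n)⁻¹ •
      ∑ h ∈ ExtSet F g, MonoidAlgebra.single h (1 : ℂ)))).comp
    (MonoidAlgebra.coeffLinearEquiv ℂ).toLinearMap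

/-- Character of a matrix representation, as a linear functional on the group algebra. -/
noncomputable def charFun {n d : ℕ} (ρ : Representation ℂ (GLn F n) (Fin d → ℂ))
    (a : GA F n) : ℂ :=
  Finsupp.sum a.coeff (fun g c => c * LinearMap.trace ℂ (Fin d → ℂ) (ρ g))

/-- `ρ` is an irreducible representation of `GL(n,q)` which is unipotent, i.e. possesses a
nonzero `B_n`-invariant vector. -/
def IsUnipotentIrrep {n d : ℕ} (ρ : Representation ℂ (GLn F n) (Fin d → ℂ)) : Prop :=
  (∀ W : Submodule ℂ (Fin d → ℂ), (∀ (g : GLn F n), ∀ v ∈ W, ρ g v ∈ W) → W = ⊥ ∨ W = ⊤) ∧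
  (∃ v : Fin d → ℂ, v ≠ 0 ∧ ∀ b : GLn F n, IsUT F b → ρ b v = v)

/-- A functional on `ℂ[GL(n,q)]` is unipotent if it is a linear combination of characters of
irreducible unipotent representations of `GL(n,q)`. -/
def IsUnipotentFunctional {n : ℕ} (φ : GA F n → ℂ) : Prop :=
  ∃ (k : ℕ) (c : Fin k → ℂ) (d : Fin k → ℕ)
    (ρ : (i : Fin k) → Representation ℂ (GLn F n) (Fin (d i) → ℂ)),
    (∀ i, IsUnipotentIrrep F (ρ i)) ∧ ∀ a : GA F n, φ a = ∑ i, c i * charFun F (ρ i) a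

section Abstract
variable {A : Type} [NonUnitalRing A] [Module ℂ A] [SMulCommClass ℂ A A] [IsScalarTower ℂ A A]
  [StarRing A] [StarModule ℂ A]

/-- A trace of a non-unital `*`-algebra: a central positive-definite linear functional. -/
def IsTrace (χ : A →ₗ[ℂ] ℂ) : Prop :=
  (∀ x y : A, χ (x * y) = χ (y * x)) ∧ (∀ x : A, 0 ≤ χ (star x * x))

/-- A nonzero trace is extreme if any decomposition into a sum of two traces is trivial. -/
def IsExtremeTrace (χ : A →ₗ[ℂ] ℂ) : Prop :=
  IsTrace χ ∧ χ ≠ 0 ∧ ∀ χ₁ χ₂ : A →ₗ[ℂ] ℂ, IsTrace χ₁ → IsTrace χ₂ → χ = χ₁ + χ₂ →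
    ∃ c₁ c₂ : ℝ, 0 ≤ c₁ ∧ 0 ≤ c₂ ∧ χ₁ = (c₁ : ℂ) • χ ∧ χ₂ = (c₂ : ℂ) • χ
end Abstract

/-- Block-diagonal matrix `a ⊙ b ∈ GL(n+m,q)` with blocks `a ∈ GL(n,q)` and `b ∈ GL(m,q)`. -/
noncomputable def blockDiagGL {n m : ℕ} (a : GLn F n) (b : GLn F m) : GLn F (n + m) :=
  Matrix.GeneralLinearGroup.mkOfDetNeZero
    ((Matrix.fromBlocks (a : Matrix (Fin n) (Fin n) F) 0 0 (b : Matrix (Fin m) (Fin m) F)).submatrix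
      finSumFinEquiv.symm finSumFinEquiv.symm)
    (by
      rw [Matrix.det_submatrix_equiv_self, Matrix.det_fromBlocks_zero₂₁]
      exact mul_ne_zero
        (((Matrix.isUnit_iff_isUnit_det _).mp a.isUnit).ne_zero)
        (((Matrix.isUnit_iff_isUnit_det _).mp b.isUnit).ne_zero))

/-!
A trace of `A(GLB)` is a family of central positive functionals `f n` on the algebras
`ℂ[GL(n,q)]`, compatible with the parabolic embeddings. If `a` and `b` have coprime
characteristic polynomials, then by Sylvester's theorem every `[[a, u], [0, b]]` is conjugate to
`a ⊙ b`, so `f (a ⊙ b) = f (a ⊚ b)`, where `⊚` averages over `u`.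

To see that `f (x ⊚ y) = f x * f y`, let `e` be the idempotent of the Borel subgroup of
`GL(m,q)`. For `y = star w * e * w` the family `x ↦ f (y ⊚ x)` is again a trace, dominated by a
multiple of `f`, so extremality and polarization give the identity for all `y` in the two-sided
ideal generated by `e`. This uses `f (x ⊚ y) = f (y ⊚ x)`, which holds because matrices are
conjugate to their transposes. A complement of the ideal consists of `k` with `k * w * e = 0` for
all `w`; by the Bruhat decomposition `x ⊚ k` then kills the Borel-invariant vectors of every
representation of `GL(n+m,q)`, so for unipotent `f` both sides vanish.
-/

universe u

open scoped BigOperators Matrix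

/-! ### Matrices are conjugate to their transposes -/

/-- Prime-power quotients are local Frobenius algebras: any functional nonzero on the socle is
nondegenerate. -/
theorem exists_nondegenerate_functional_quotient_pow {K R : Type*} [Field K] [CommRing R]
    [IsDomain R] [IsPrincipalIdealRing R] [Algebra K R] {p : R} (hp : Irreducible p) (e : ℕ) :
    ∃ L : R ⧸ Ideal.span {p ^ e} →ₗ[K] K, ∀ x ≠ 0, ∃ y, L (x * y) ≠ 0 := by
  obtain _ | e := e
  · have : Subsingleton (R ⧸ Ideal.span {p ^ 0}) := by simp
    exact ⟨0, fun x hx => absurd (Subsingleton.elim x 0) hx⟩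
  let mk := Ideal.Quotient.mk (Ideal.span {p ^ (e + 1)})
  have mk_eq_zero (x : R) : mk x = 0 ↔ p ^ (e + 1) ∣ x := Ideal.Quotient.eq_zero_iff_dvd _ _
  have socle_ne_zero : mk (p ^ e) ≠ 0 := by
    rw [Ne, mk_eq_zero, pow_dvd_pow_iff hp.ne_zero hp.not_isUnit]
    omega
  obtain ⟨L, hL⟩ : ∃ L : Module.Dual K (R ⧸ Ideal.span {p ^ (e + 1)}), L (mk (p ^ e)) ≠ 0 := by
    simpa using (Module.forall_dual_apply_eq_zero_iff K (mk (p ^ e))).not.mpr socle_ne_zero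
  refine ⟨L, fun x hx => ?_⟩
  obtain ⟨g, rfl⟩ := Ideal.Quotient.mk_surjective x
  have hg : g ≠ 0 := by
    rintro rfl
    exact hx (map_zero _)
  obtain ⟨u, hgu, hpu⟩ :=
    (FiniteMultiplicity.of_not_isUnit hp.not_isUnit hg).exists_eq_pow_mul_and_not_dvd
  obtain ⟨k, hk⟩ := Nat.exists_eq_add_of_le' <| show multiplicity p g ≤ e by
    by_contra! h
    exact hx ((mk_eq_zero g).mpr ((pow_dvd_pow p h).trans (pow_multiplicity_dvd p g)))
  obtain ⟨a, b, hab⟩ : IsCoprime u p := (hp.coprime_iff_not_dvd.mpr hpu).symm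
  refine ⟨mk (a * p ^ k), ?_⟩
  have mul_eq_socle : mk g * mk (a * p ^ k) = mk (p ^ e) := by
    rw [← map_mul, ← sub_eq_zero, ← map_sub, mk_eq_zero]
    refine ⟨-b, ?_⟩
    rw [hgu, hk]
    linear_combination p ^ (k + multiplicity p g) * hab
  rwa [mul_eq_socle]

theorem exists_nondegenerate_functional_pi {ι K : Type*} [Finite ι] [Field K] {R : ι → Type*}
    [∀ i, CommRing (R i)] [∀ i, Algebra K (R i)]
    (h : ∀ i, ∃ L : R i →ₗ[K] K, ∀ x ≠ 0, ∃ y, L (x * y) ≠ 0) :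
    ∃ L : (∀ i, R i) →ₗ[K] K, ∀ x ≠ 0, ∃ y, L (x * y) ≠ 0 := by
  classical
  have := Fintype.ofFinite ι
  choose L hL using h
  refine ⟨∑ i, L i ∘ₗ LinearMap.proj i, fun x hx => ?_⟩
  obtain ⟨i, hi⟩ := Function.ne_iff.mp hx
  obtain ⟨y, hy⟩ := hL i (x i) hi
  refine ⟨Pi.single i y, ?_⟩
  suffices ∑ j, L j (x j * Pi.single i y j) = L i (x i * y) by simpa [this] using hy
  refine (Fintype.sum_eq_single i fun j hj => ?_).trans ?_
  · rw [Pi.single_eq_of_ne hj, mul_zero, map_zero]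
  · rw [Pi.single_eq_same]

open Polynomial in
theorem exists_linearEquiv_algebra_mul {K : Type u} {V : Type*} [Field K] [AddCommGroup V]
    [Module K V] [FiniteDimensional K V] (T : Module.End K V) :
    ∃ (R : Type u) (_ : CommRing R) (_ : Algebra K R) (L : R →ₗ[K] K) (t : R) (φ : V ≃ₗ[K] R),
      (∀ x ≠ 0, ∃ y, L (x * y) ≠ 0) ∧ ∀ v, φ (T v) = t * φ v := by
  obtain ⟨ι, _, p, hp, e, ⟨Φ⟩⟩ := Module.equiv_directSum_of_isTorsion
    (Module.AEval.isTorsion_of_finiteDimensional K V T)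
  obtain ⟨L, hL⟩ := exists_nondegenerate_functional_pi fun i =>
    exists_nondegenerate_functional_quotient_pow (K := K) (hp i) (e i)
  let Ψ : Module.AEval' T ≃ₗ[K[X]] ∀ i, K[X] ⧸ Ideal.span {p i ^ e i} := by
    classical
    exact Φ.trans (DirectSum.linearEquivFunOnFintype K[X] ι _)
  refine ⟨∀ i, K[X] ⧸ Ideal.span {p i ^ e i}, inferInstance, inferInstance, L,
    algebraMap K[X] _ X, (Module.AEval'.of T).trans (Ψ.restrictScalars K), hL, fun v => ?_⟩
  simp only [LinearEquiv.trans_apply, LinearEquiv.restrictScalars_apply]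
  rw [← Module.AEval'.X_smul_of, map_smul]
  exact Algebra.smul_def (A := ∀ i, K[X] ⧸ Ideal.span {p i ^ e i}) X _

theorem exists_transpose_mul_eq_mul {K n : Type*} [Field K] [Fintype n] [DecidableEq n]
    (M : Matrix n n K) : ∃ S : Matrix n n K, S.det ≠ 0 ∧ M.transpose * S = S * M := by
  obtain ⟨R, _, _, L, t, φ, hL, hφ⟩ := exists_linearEquiv_algebra_mul (Matrix.toLin' M)
  let B : (n → K) →ₗ[K] (n → K) →ₗ[K] K :=
    ((LinearMap.mul K R).compl₁₂ φ.toLinearMap φ.toLinearMap).compr₂ L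
  have toMatrix_B : Matrix.toLinearMap₂' K (LinearMap.toMatrix₂' K B) = B := by simp
  refine ⟨LinearMap.toMatrix₂' K B, ?_, ?_⟩
  · rw [← LinearMap.separatingLeft_toLinearMap₂'_iff_det_ne_zero, toMatrix_B]
    intro v hv
    by_contra! hne
    obtain ⟨y, hy⟩ := hL (φ v) (by simpa using hne)
    exact hy (by simpa [B] using hv (φ.symm y))
  · have adjoint : LinearMap.IsAdjointPair B B (Matrix.toLin' M) (Matrix.toLin' M) := by
      intro v w
      change L (φ _ * φ w) = L (φ v * φ _)
      rw [hφ, hφ]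
      ring_nf
    exact (isAdjointPair_toLinearMap₂' _ _ _ _).1 (by rwa [toMatrix_B])

theorem exists_conj_eq_transpose {K n : Type*} [Field K] [Fintype n] [DecidableEq n] (a : GL n K) :
    ∃ s : GL n K, ((s * a * s⁻¹ : GL n K) : Matrix n n K) = (a : Matrix n n K).transpose := by
  obtain ⟨S, hS, hSa⟩ := exists_transpose_mul_eq_mul (a : Matrix n n K)
  let s := Matrix.GeneralLinearGroup.mkOfDetNeZero S hS
  refine ⟨s, ?_⟩
  have : (a : Matrix n n K).transpose * (s : Matrix n n K) = s * a := hSa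
  rw [Units.val_mul, Units.val_mul, ← this, mul_assoc, ← Units.val_mul, mul_inv_cancel,
    Units.val_one, mul_one]

/-! ### Group algebras and positive functionals -/

theorem addMonoidHom_map_expect {M N Φ ι : Type*} [AddCommMonoid M] [AddCommMonoid N]
    [Module ℚ≥0 M] [Module ℚ≥0 N] [FunLike Φ M N] [AddMonoidHomClass Φ M N] (φ : Φ)
    (s : Finset ι) (f : ι → M) : φ (𝔼 i ∈ s, f i) = 𝔼 i ∈ s, φ (f i) := by
  simp only [Finset.expect, map_nnrat_smul, map_sum]

section GroupAlgebraStar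

variable {k G : Type*} [CommSemiring k] [StarRing k] [Group G]

/-- The canonical involution of a group algebra over a star ring. -/
noncomputable instance groupAlgebraStar : Star (MonoidAlgebra k G) where
  star x := (x.mapDomain (·⁻¹)).map (starAddEquiv : k ≃+ k).toAddMonoidHom

@[simp]
theorem star_single (g : G) (r : k) :
    star (MonoidAlgebra.single g r) = MonoidAlgebra.single g⁻¹ (star r) := by
  simp [star]

theorem groupAlgebra_star_add (x y : MonoidAlgebra k G) : star (x + y) = star x + star y := by
  simp [star, MonoidAlgebra.mapDomain_add, MonoidAlgebra.map_add]

noncomputable instance groupAlgebraStarRing : StarRing (MonoidAlgebra k G) where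
  star_add := groupAlgebra_star_add
  star_involutive x := by
    induction x using MonoidAlgebra.induction_linear with
    | zero => simp [star]
    | add x y hx hy => simp only [groupAlgebra_star_add, hx, hy]
    | single g r => simp
  star_mul x y := by
    induction x using MonoidAlgebra.induction_linear with
    | zero => simp [star]
    | add x x' hx hx' => simp only [add_mul, mul_add, groupAlgebra_star_add, hx, hx']
    | single g r =>
      induction y using MonoidAlgebra.induction_linear with
      | zero => simp [star]
      | add y y' hy hy' => simp only [add_mul, mul_add, groupAlgebra_star_add, hy, hy']
      | single h s => simp [mul_comm]

instance groupAlgebraStarModule : StarModule k (MonoidAlgebra k G) where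
  star_smul r x := by
    induction x using MonoidAlgebra.induction_linear with
    | zero => simp
    | add x y hx hy => simp only [smul_add, star_add, hx, hy]
    | single g s => simp

end GroupAlgebraStar

section SubgroupAverage

variable {G : Type*} [Group G] (H : Subgroup G) [Fintype H]

/-- The idempotent `|H|⁻¹ ∑_{h ∈ H} e_h` of a finite subgroup `H`. -/
noncomputable def subgroupAverage : MonoidAlgebra ℂ G :=
  𝔼 h : H, MonoidAlgebra.single (h : G) 1

variable {H}

theorem single_mul_subgroupAverage {g : G} (hg : g ∈ H) :
    MonoidAlgebra.single g 1 * subgroupAverage H = subgroupAverage H := by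
  rw [subgroupAverage, Finset.mul_expect]
  refine Fintype.expect_equiv (Equiv.mulLeft ⟨g, hg⟩) _ _ fun h => ?_
  simp

theorem subgroupAverage_mul_single {g : G} (hg : g ∈ H) :
    subgroupAverage H * MonoidAlgebra.single g 1 = subgroupAverage H := by
  rw [subgroupAverage, Finset.expect_mul]
  refine Fintype.expect_equiv (Equiv.mulRight ⟨g, hg⟩) _ _ fun h => ?_
  simp

variable (H)

theorem subgroupAverage_mul_self : subgroupAverage H * subgroupAverage H = subgroupAverage H := by
  conv_lhs => enter [1]; rw [subgroupAverage]
  rw [Finset.expect_mul]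
  simp only [single_mul_subgroupAverage (Subtype.prop _), Fintype.expect_const]

theorem star_subgroupAverage : star (subgroupAverage H) = subgroupAverage H := by
  rw [subgroupAverage, ← starAddEquiv_apply, addMonoidHom_map_expect]
  refine Fintype.expect_equiv (Equiv.inv H) _ _ fun h => ?_
  simp

end SubgroupAverage

theorem apply_star_mul_self_add_le {R : Type*} [Ring R] [StarRing R] [Module ℂ R]
    {φ : R →ₗ[ℂ] ℂ} (hφ : ∀ x, 0 ≤ φ (star x * x)) (x y : R) :
    φ (star (x + y) * (x + y)) ≤ 2 * φ (star x * x) + 2 * φ (star y * y) := by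
  have parallelogram : φ (star (x + y) * (x + y)) + φ (star (x - y) * (x - y))
      = 2 * φ (star x * x) + 2 * φ (star y * y) := by
    simp only [star_add, star_sub, add_mul, mul_add, sub_mul, mul_sub, map_add, map_sub]
    ring
  rw [← parallelogram]
  exact le_add_of_nonneg_right (hφ _)

theorem exists_apply_star_mul_self_le {G : Type*} [Group G] (w : MonoidAlgebra ℂ G) :
    ∃ C : ℝ, 0 ≤ C ∧ ∀ φ : MonoidAlgebra ℂ G →ₗ[ℂ] ℂ, (∀ x, 0 ≤ φ (star x * x)) →
      φ (star w * w) ≤ C * φ 1 := by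
  induction w using MonoidAlgebra.induction_linear with
  | zero => exact ⟨0, le_rfl, by simp⟩
  | add x y hx hy =>
    obtain ⟨C, hC, hx⟩ := hx
    obtain ⟨D, hD, hy⟩ := hy
    refine ⟨2 * C + 2 * D, by positivity, fun φ hφ => ?_⟩
    calc φ (star (x + y) * (x + y))
        ≤ 2 * φ (star x * x) + 2 * φ (star y * y) := apply_star_mul_self_add_le hφ x y
      _ ≤ 2 * (C * φ 1) + 2 * (D * φ 1) := by gcongr <;> first | exact hx φ hφ | exact hy φ hφ
      _ = _ := by push_cast; ring
  | single g r =>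
    refine ⟨‖r‖ ^ 2, by positivity, fun φ _ => le_of_eq ?_⟩
    have : star (MonoidAlgebra.single g r) * MonoidAlgebra.single g r
        = ((‖r‖ ^ 2 : ℝ) : ℂ) • (1 : MonoidAlgebra ℂ G) := by
      simp [MonoidAlgebra.one_def, Complex.conj_mul']
    rw [this, map_smul, smul_eq_mul]

theorem apply_mul_mul_eq_zero_of_apply_star_mul_mul_self {R : Type*} [Ring R] [StarRing R]
    [Algebra ℂ R] [StarModule ℂ R] {e : R} {φ : R →ₗ[ℂ] ℂ}
    (h : ∀ w, φ (star w * e * w) = 0) (z w : R) : φ (z * e * w) = 0 := by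
  have real_part := h (star z + w)
  have imaginary_part := h (star z + Complex.I • w)
  simp only [star_add, star_star, star_smul, add_mul, mul_add, smul_mul_assoc, mul_smul_comm,
    map_add, map_smul, h, smul_eq_mul, RCLike.star_def, Complex.conj_I] at real_part imaginary_part
  have hz : φ (z * e * star z) = 0 := by simpa using h (star z)
  rw [hz] at real_part imaginary_part
  have : 2 * Complex.I * φ (z * e * w) = 0 := by
    linear_combination Complex.I * real_part + imaginary_part
  simpa using this

theorem exists_eq_add_mem_span_and_mul_mul_eq_zero {R : Type*} [Ring R] [IsSemisimpleRing R]
    (e y : R) : ∃ j k, y = j + k ∧ j ∈ TwoSidedIdeal.span {e} ∧ ∀ w, k * w * e = 0 := by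
  obtain ⟨K, hJK⟩ := exists_isCompl (TwoSidedIdeal.asIdealOpposite (TwoSidedIdeal.span {e}))
  obtain ⟨j, hj, k, hk, hjk⟩ :=
    Submodule.mem_sup.mp (hJK.sup_eq_top ▸ Submodule.mem_top (x := MulOpposite.op y))
  rw [TwoSidedIdeal.mem_asIdealOpposite] at hj
  refine ⟨j.unop, k.unop, by rw [← MulOpposite.unop_add, hjk, MulOpposite.unop_op], hj,
    fun w => ?_⟩
  have he : e ∈ TwoSidedIdeal.span {e} := TwoSidedIdeal.subset_span rfl
  have mem_J : MulOpposite.op (w * e) * k ∈ TwoSidedIdeal.asIdealOpposite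
      (TwoSidedIdeal.span {e}) := by
    rw [TwoSidedIdeal.mem_asIdealOpposite]
    exact TwoSidedIdeal.mul_mem_left _ _ _ (TwoSidedIdeal.mul_mem_left _ _ _ he)
  have := Submodule.disjoint_def.mp hJK.disjoint _ mem_J (K.mul_mem_left _ hk)
  rw [mul_assoc]
  exact congrArg MulOpposite.unop this

theorem eq_zero_of_mem_twoSidedIdealSpan_singleton {R M : Type*} [Ring R] [AddCommGroup M]
    (φ : R →+ M) {e j : R} (h : ∀ z w, φ (z * e * w) = 0) (hj : j ∈ TwoSidedIdeal.span {e}) :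
    φ j = 0 := by
  rw [TwoSidedIdeal.mem_span_iff_mem_addSubgroup_closure] at hj
  refine (AddSubgroup.closure_le φ.ker).mpr ?_ hj
  rintro _ ⟨_, ⟨z, -, _, rfl, rfl⟩, w, -, rfl⟩
  exact h z w

/-! ### Block upper triangular matrices and parabolic multiplication -/

section BlockUpper

variable {R : Type*} [CommRing R] {n m : ℕ}

/-- The block upper triangular matrix `[[a, u], [0, b]]` of `GL(n+m)`. -/
def blockUpperGL (a : GL (Fin n) R) (u : Matrix (Fin n) (Fin m) R) (b : GL (Fin m) R) :
    GL (Fin (n + m)) R where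
  val := (Matrix.fromBlocks a.1 u 0 b.1).submatrix finSumFinEquiv.symm finSumFinEquiv.symm
  inv := (Matrix.fromBlocks a⁻¹.1 (-(a⁻¹.1 * u * b⁻¹.1)) 0 b⁻¹.1).submatrix
    finSumFinEquiv.symm finSumFinEquiv.symm
  val_inv := by
    rw [Matrix.submatrix_mul_equiv, Matrix.fromBlocks_multiply, Matrix.mul_neg, Matrix.mul_assoc,
      ← Matrix.mul_assoc a.1, Units.mul_inv]
    simp
  inv_val := by
    rw [Matrix.submatrix_mul_equiv, Matrix.fromBlocks_multiply]
    simp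

variable (a a' : GL (Fin n) R) (u u' : Matrix (Fin n) (Fin m) R) (b b' : GL (Fin m) R)

theorem blockUpperGL_inv :
    (blockUpperGL a u b)⁻¹ = blockUpperGL a⁻¹ (-(a⁻¹.1 * u * b⁻¹.1)) b⁻¹ :=
  Units.ext rfl

theorem blockUpperGL_mul :
    blockUpperGL a u b * blockUpperGL a' u' b'
      = blockUpperGL (a * a') (a.1 * u' + u * b'.1) (b * b') := by
  apply Units.ext
  simp [blockUpperGL, Matrix.submatrix_mul_equiv, Matrix.fromBlocks_multiply]

@[simp]
theorem blockUpperGL_apply_castAdd_castAdd (i j : Fin n) :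
    (blockUpperGL a u b).1 (Fin.castAdd m i) (Fin.castAdd m j) = a.1 i j := by
  simp [blockUpperGL]

@[simp]
theorem blockUpperGL_apply_castAdd_natAdd (i : Fin n) (j : Fin m) :
    (blockUpperGL a u b).1 (Fin.castAdd m i) (Fin.natAdd n j) = u i j := by
  simp [blockUpperGL]

@[simp]
theorem blockUpperGL_apply_natAdd_castAdd (i : Fin m) (j : Fin n) :
    (blockUpperGL a u b).1 (Fin.natAdd n i) (Fin.castAdd m j) = 0 := by
  simp [blockUpperGL]

@[simp]
theorem blockUpperGL_apply_natAdd_natAdd (i j : Fin m) :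
    (blockUpperGL a u b).1 (Fin.natAdd n i) (Fin.natAdd n j) = b.1 i j := by
  simp [blockUpperGL]

variable {a a' u u' b b'}

theorem eq_blockUpperGL_iff {g : GL (Fin (n + m)) R} :
    g = blockUpperGL a u b ↔
      (∀ i j, g.1 (Fin.castAdd m i) (Fin.castAdd m j) = a.1 i j) ∧
      (∀ i j, g.1 (Fin.castAdd m i) (Fin.natAdd n j) = u i j) ∧
      (∀ (i : Fin m) (j : Fin n), g.1 (Fin.natAdd n i) (Fin.castAdd m j) = 0) ∧
      ∀ i j, g.1 (Fin.natAdd n i) (Fin.natAdd n j) = b.1 i j := by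
  refine ⟨by rintro rfl; simp, fun ⟨h₁₁, h₁₂, h₂₁, h₂₂⟩ => Units.ext <| Matrix.ext fun i j => ?_⟩
  induction i using Fin.addCases <;> induction j using Fin.addCases <;>
    simp [h₁₁, h₁₂, h₂₁, h₂₂]

theorem blockUpperGL_inj :
    blockUpperGL a u b = blockUpperGL a' u' b' ↔ a = a' ∧ u = u' ∧ b = b' := by
  rw [eq_blockUpperGL_iff]
  simp [Units.ext_iff, ← Matrix.ext_iff]

theorem exists_eq_blockUpperGL {g : GL (Fin (n + m)) R}
    (hg : ∀ (i : Fin m) (j : Fin n), g.1 (Fin.natAdd n i) (Fin.castAdd m j) = 0) :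
    ∃ a u b, g = blockUpperGL a u b := by
  let M := g.1.submatrix finSumFinEquiv finSumFinEquiv
  have hM : M = Matrix.fromBlocks M.toBlocks₁₁ M.toBlocks₁₂ 0 M.toBlocks₂₂ := by
    have hM₂₁ : M.toBlocks₂₁ = 0 := by
      ext i j
      simpa [M, Matrix.toBlocks₂₁] using hg i j
    rw [← hM₂₁, Matrix.fromBlocks_toBlocks]
  have hdet : IsUnit (M.toBlocks₁₁.det * M.toBlocks₂₂.det) := by
    rw [← Matrix.det_fromBlocks_zero₂₁, ← hM, Matrix.det_submatrix_equiv_self]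
    exact (Matrix.isUnit_iff_isUnit_det _).mp g.isUnit
  rw [IsUnit.mul_iff] at hdet
  refine ⟨Matrix.nonsingInvUnit _ hdet.1, M.toBlocks₁₂, Matrix.nonsingInvUnit _ hdet.2,
    Units.ext ?_⟩
  change g.1 = (Matrix.fromBlocks M.toBlocks₁₁ M.toBlocks₁₂ 0 M.toBlocks₂₂).submatrix _ _
  rw [← hM, Matrix.submatrix_submatrix]
  simp

end BlockUpper

section BlockUpperField

variable {K : Type} [Field K] {n m : ℕ} (a : GLn K n) (u : Matrix (Fin n) (Fin m) K) (b : GLn K m)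

theorem blockUpperGL_zero : blockUpperGL a 0 b = blockDiagGL K a b :=
  Units.ext rfl

theorem isUT_blockUpperGL_iff :
    IsUT K (blockUpperGL a u b) ↔ IsUT K a ∧ IsUT K b := by
  refine ⟨fun h => ⟨fun i j hij => ?_, fun i j hij => ?_⟩, fun ⟨ha, hb⟩ i j hij => ?_⟩
  · simpa using h (Fin.castAdd m i) (Fin.castAdd m j) hij
  · simpa using h (Fin.natAdd n i) (Fin.natAdd n j) (by simpa using hij)
  · induction i using Fin.addCases <;> induction j using Fin.addCases
    · simpa using ha _ _ hij
    · simp [Fin.lt_def] at hij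
      omega
    · simp
    · simpa using hb _ _ (by simpa using hij)

end BlockUpperField

/-- Parabolic multiplication `ℂ[GL(n,q)] × ℂ[GL(m,q)] → ℂ[GL(n+m,q)]`, the bilinear map sending
`(e_a, e_b)` to the average of `e_g` over all `g = [[a, u], [0, b]]`. -/
noncomputable def parabolicMul {K : Type} [Field K] [Fintype K] {n m : ℕ} :
    GA K n →ₗ[ℂ] GA K m →ₗ[ℂ] GA K (n + m) :=
  (MonoidAlgebra.basis (GLn K n) ℂ).constr ℂ fun a =>
    (MonoidAlgebra.basis (GLn K m) ℂ).constr ℂ fun b =>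
      𝔼 u, MonoidAlgebra.single (blockUpperGL a u b) (1 : ℂ)

local infixl:70 " ⊚ " => parabolicMul

section ParabolicMul

variable {K : Type} [Field K] [Fintype K] {n m : ℕ}

theorem parabolicMul_expect {ι : Type*} (x : GA K n) (s : Finset ι) (y : ι → GA K m) :
    x ⊚ (𝔼 i ∈ s, y i) = 𝔼 i ∈ s, x ⊚ y i :=
  addMonoidHom_map_expect _ _ _

theorem expect_parabolicMul {ι : Type*} (s : Finset ι) (x : ι → GA K n) (y : GA K m) :
    (𝔼 i ∈ s, x i) ⊚ y = 𝔼 i ∈ s, x i ⊚ y :=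
  addMonoidHom_map_expect (parabolicMul.flip y) _ _

theorem parabolicMul_single_single (a : GLn K n) (b : GLn K m) :
    MonoidAlgebra.single a (1 : ℂ) ⊚ MonoidAlgebra.single b 1
      = 𝔼 u, MonoidAlgebra.single (blockUpperGL a u b) (1 : ℂ) := by
  have basis_apply (k : ℕ) (g : GLn K k) :
      MonoidAlgebra.single g (1 : ℂ) = MonoidAlgebra.basis (GLn K k) ℂ g := by simp
  rw [parabolicMul, basis_apply, basis_apply, Module.Basis.constr_basis,
    Module.Basis.constr_basis]

theorem parabolicMul_mul_single (x : GA K n) (y : GA K m) (a : GLn K n)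
    (u : Matrix (Fin n) (Fin m) K) (b : GLn K m) :
    (x ⊚ y) * MonoidAlgebra.single (blockUpperGL a u b) (1 : ℂ)
      = (x * MonoidAlgebra.single a (1 : ℂ)) ⊚ (y * MonoidAlgebra.single b 1) := by
  induction x using MonoidAlgebra.induction_on with
  | add x x' hx hx' => simp only [map_add, LinearMap.add_apply, add_mul, hx, hx']
  | smul r x hx => simp only [map_smul, LinearMap.smul_apply, smul_mul_assoc, hx]
  | of a' =>
    induction y using MonoidAlgebra.induction_on with
    | add y y' hy hy' => simp only [map_add, add_mul, hy, hy']
    | smul r y hy => simp only [map_smul, smul_mul_assoc, hy]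
    | of b' =>
      have translate_bijective :
          Function.Bijective fun v : Matrix (Fin n) (Fin m) K => a'.1 * u + v * b.1 := by
        refine Finite.injective_iff_bijective.mp fun v v' h => ?_
        exact Matrix.mul_left_injective_of_inv _ _ b.mul_inv (add_left_cancel h)
      simp only [MonoidAlgebra.of_apply, MonoidAlgebra.single_mul_single, mul_one,
        parabolicMul_single_single, Finset.expect_mul, blockUpperGL_mul]
      exact Fintype.expect_bijective _ translate_bijective _ _ fun _ => rfl

theorem parabolicMul_mul_parabolicMul (x x' : GA K n) (y y' : GA K m) :
    (x ⊚ y) * (x' ⊚ y') = (x * x') ⊚ (y * y') := by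
  induction x' using MonoidAlgebra.induction_on with
  | add x₁ x₂ h₁ h₂ => simp only [map_add, LinearMap.add_apply, mul_add, h₁, h₂]
  | smul r x' h => simp only [map_smul, LinearMap.smul_apply, mul_smul_comm, h]
  | of a =>
    induction y' using MonoidAlgebra.induction_on with
    | add y₁ y₂ h₁ h₂ => simp only [map_add, mul_add, h₁, h₂]
    | smul r y' h => simp only [map_smul, mul_smul_comm, h]
    | of b =>
      simp only [MonoidAlgebra.of_apply, parabolicMul_single_single, Finset.mul_expect,
        parabolicMul_mul_single, Fintype.expect_const]

theorem star_parabolicMul (x : GA K n) (y : GA K m) : star (x ⊚ y) = star x ⊚ star y := by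
  induction x using MonoidAlgebra.induction_on with
  | add x x' hx hx' => simp only [map_add, LinearMap.add_apply, star_add, hx, hx']
  | smul r x hx => simp only [map_smul, LinearMap.smul_apply, star_smul, hx]
  | of a =>
    induction y using MonoidAlgebra.induction_on with
    | add y y' hy hy' => simp only [map_add, star_add, hy, hy']
    | smul r y hy => simp only [map_smul, star_smul, hy]
    | of b =>
      have inverse_bijective :
          Function.Bijective fun u : Matrix (Fin n) (Fin m) K => -(a⁻¹.1 * u * b⁻¹.1) := by
        refine Finite.injective_iff_bijective.mp fun u v h => ?_
        exact Matrix.mul_right_injective_of_inv _ _ a.mul_inv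
          (Matrix.mul_left_injective_of_inv _ _ b.inv_mul (neg_injective h))
      simp only [MonoidAlgebra.of_apply, star_single, star_one, parabolicMul_single_single]
      rw [← starAddEquiv_apply, addMonoidHom_map_expect]
      refine Fintype.expect_bijective _ inverse_bijective _ _ fun u => ?_
      rw [starAddEquiv_apply, star_single, star_one, blockUpperGL_inv]

theorem parabolicMul_one_zero (x : GA K n) : x ⊚ (1 : GA K 0) = x := by
  induction x using MonoidAlgebra.induction_on with
  | add x x' hx hx' => simp only [map_add, LinearMap.add_apply, hx, hx']
  | smul r x hx => simp only [map_smul, LinearMap.smul_apply, hx]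
  | of a =>
    have unique_extension (u : Matrix (Fin n) (Fin 0) K) : blockUpperGL a u 1 = a :=
      Units.ext <| Matrix.ext fun i j => blockUpperGL_apply_castAdd_castAdd a u 1 i j
    rw [MonoidAlgebra.of_apply, MonoidAlgebra.one_def, parabolicMul_single_single]
    simp only [unique_extension, Fintype.expect_const]

end ParabolicMul

/-! ### The Borel idempotent -/

section Borel

variable (K : Type) [Field K] (m : ℕ)

/-- The Borel subgroup `B_m` of `GL(m,q)`. -/
def borelSubgroup : Subgroup (GLn K m) where
  carrier := {b | IsUT K b}
  mul_mem' {a b} ha hb := Matrix.BlockTriangular.mul (b := id) (M := a.1) (N := b.1) ha hb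
  one_mem' _ _ hij := Matrix.one_apply_ne hij.ne'
  inv_mem' {b} hb := by
    have : Invertible b.1 := b.isUnit.invertible
    have := Matrix.blockTriangular_inv_of_blockTriangular (b := id) (M := b.1) hb
    rwa [← Matrix.coe_units_inv] at this

noncomputable instance borelSubgroupFintype [Finite K] :
    Fintype (borelSubgroup K m) := Fintype.ofFinite _

/-- The idempotent of `ℂ[GL(m,q)]` whose image in a representation is the space of `B_m`-invariant
vectors. Its image in `A(GLB)` is `I_B`, whatever `m` is. -/
noncomputable def borelIdem [Finite K] : GA K m := subgroupAverage (borelSubgroup K m)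

end Borel

section BorelIdem

variable {K : Type} [Field K] {n m : ℕ}

section Finite

variable [Finite K]

theorem borelIdem_eq_expect :
    borelIdem K m = 𝔼 b : borelSubgroup K m, MonoidAlgebra.single b.1 1 :=
  rfl

theorem borelIdem_mul_self : borelIdem K m * borelIdem K m = borelIdem K m :=
  subgroupAverage_mul_self _

theorem star_borelIdem : star (borelIdem K m) = borelIdem K m :=
  star_subgroupAverage _

theorem star_mul_borelIdem_mul (w : GA K m) :
    star w * borelIdem K m * w = star (borelIdem K m * w) * (borelIdem K m * w) := by
  rw [star_mul, star_borelIdem, ← mul_assoc, mul_assoc (star w) (borelIdem K m) (borelIdem K m),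
    borelIdem_mul_self]

theorem borelIdem_zero : borelIdem K 0 = 1 := by
  rw [borelIdem_eq_expect, MonoidAlgebra.one_def]
  simp only [Subsingleton.elim _ (1 : GLn K 0), Fintype.expect_const]

theorem borelIdem_mul_single {b : GLn K m} (hb : IsUT K b) :
    borelIdem K m * MonoidAlgebra.single b 1 = borelIdem K m :=
  subgroupAverage_mul_single (H := borelSubgroup K m) hb

theorem single_mul_borelIdem {b : GLn K m} (hb : IsUT K b) :
    MonoidAlgebra.single b 1 * borelIdem K m = borelIdem K m :=
  single_mul_subgroupAverage (H := borelSubgroup K m) hb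

end Finite

variable [Fintype K]

theorem parabolicMul_borelIdem_borelIdem :
    borelIdem K n ⊚ borelIdem K m = borelIdem K (n + m) := by
  have right_absorbs : (borelIdem K n ⊚ borelIdem K m) * borelIdem K (n + m)
      = borelIdem K n ⊚ borelIdem K m := by
    rw [borelIdem_eq_expect (m := n + m), Finset.mul_expect]
    refine (Finset.expect_congr rfl fun g _ => ?_).trans (Fintype.expect_const _)
    obtain ⟨a, u, b, hg⟩ := exists_eq_blockUpperGL (n := n) (m := m) (g := g.1) fun i j =>
      g.2 _ _ (Fin.lt_def.mpr (j.2.trans_le (Nat.le_add_right n i)))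
    obtain ⟨ha, hb⟩ := (isUT_blockUpperGL_iff a u b).mp (hg ▸ g.2)
    rw [hg, parabolicMul_mul_single, borelIdem_mul_single ha, borelIdem_mul_single hb]
  have left_absorbs : (borelIdem K n ⊚ borelIdem K m) * borelIdem K (n + m)
      = borelIdem K (n + m) := by
    have absorbs (a : borelSubgroup K n) (b : borelSubgroup K m) (u : Matrix (Fin n) (Fin m) K) :
        MonoidAlgebra.single (blockUpperGL a.1 u b.1) 1 * borelIdem K (n + m)
          = borelIdem K (n + m) :=
      single_mul_borelIdem ((isUT_blockUpperGL_iff _ _ _).mpr ⟨a.2, b.2⟩)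
    rw [borelIdem_eq_expect (m := n), borelIdem_eq_expect (m := m)]
    simp only [expect_parabolicMul, parabolicMul_expect, parabolicMul_single_single,
      Finset.expect_mul, absorbs, Fintype.expect_const]
  rw [← right_absorbs, left_absorbs]

theorem extSet_eq_image [DecidableEq K] (a : GLn K n) :
    ExtSet K a = Finset.univ.image fun p : GLn K 1 × Matrix (Fin n) (Fin 1) K =>
      blockUpperGL a p.2 p.1 := by
  ext g
  simp only [ExtSet, Finset.mem_filter, Finset.mem_univ, true_and, Finset.mem_image, Prod.exists]
  refine ⟨fun ⟨corner, last_row⟩ => ?_, ?_⟩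
  · obtain ⟨a', u, t, rfl⟩ := exists_eq_blockUpperGL (n := n) (m := 1) (g := g) fun i j =>
      Subsingleton.elim 0 i ▸ last_row j
    have : a' = a := Units.ext <| Matrix.ext fun i j =>
      (blockUpperGL_apply_castAdd_castAdd a' u t i j).symm.trans (corner i j)
    exact ⟨t, u, by rw [this]⟩
  · rintro ⟨t, u, rfl⟩
    exact ⟨blockUpperGL_apply_castAdd_castAdd a u t, blockUpperGL_apply_natAdd_castAdd a u t 0⟩

theorem card_extSet [DecidableEq K] (a : GLn K n) :
    (ExtSet K a).card = (Fintype.card K - 1) * Fintype.card K ^ n := by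
  rw [extSet_eq_image, Finset.card_image_of_injective, Finset.card_univ, Fintype.card_prod,
    ← Nat.card_eq_fintype_card (α := GLn K 1), Matrix.card_GL_field]
  · have : Fintype.card (Matrix (Fin n) (Fin 1) K) = Fintype.card K ^ n :=
      (Fintype.card_pi_const _ n).trans (by simp)
    simp [this]
  · rintro ⟨t, u⟩ ⟨t', u'⟩ h
    obtain ⟨-, rfl, rfl⟩ := blockUpperGL_inj.mp h
    rfl

theorem paraEmb_eq_parabolicMul [DecidableEq K] (x : GA K n) :
    paraEmb K n x = x ⊚ borelIdem K 1 := by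
  induction x using MonoidAlgebra.induction_on with
  | add x y hx hy => simp only [map_add, LinearMap.add_apply, hx, hy]
  | smul r x hx => simp only [map_smul, LinearMap.smul_apply, hx]
  | of a =>
    have mem_borel : ∀ t : GLn K 1, t ∈ borelSubgroup K 1 := fun t i j hij => by omega
    calc paraEmb K n (MonoidAlgebra.single a 1)
        = 𝔼 g ∈ ExtSet K a, MonoidAlgebra.single g (1 : ℂ) := by
          rw [Finset.expect, card_extSet, ← NNRat.cast_smul_eq_nnqsmul ℂ, NNRat.cast_inv,
            NNRat.cast_natCast, Nat.cast_mul, Nat.cast_pred Fintype.card_pos]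
          simp [paraEmb]
      _ = 𝔼 t : GLn K 1, 𝔼 u, MonoidAlgebra.single (blockUpperGL a u t) (1 : ℂ) := by
          rw [extSet_eq_image, Finset.expect_image, ← Finset.univ_product_univ,
            Finset.expect_product]
          rintro ⟨t, u⟩ - ⟨t', u'⟩ - h
          obtain ⟨-, rfl, rfl⟩ := blockUpperGL_inj.mp h
          rfl
      _ = MonoidAlgebra.single a 1 ⊚ borelIdem K 1 := by
          rw [borelIdem_eq_expect, parabolicMul_expect]
          simp only [parabolicMul_single_single]
          exact (Fintype.expect_equiv (Equiv.subtypeUnivEquiv mem_borel) _ _ fun _ => rfl).symm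

/-- Regroups the entries above the diagonal of a `(n, m, 1)` block upper triangular matrix, from
the blocking `(n + m, 1)` with its `(n, m)` sub-blocking to the blocking `(n, m + 1)` with its
`(m, 1)` sub-blocking. -/
def upperBlocksEquiv (R : Type*) (n m : ℕ) :
    Matrix (Fin n) (Fin m) R × Matrix (Fin (n + m)) (Fin 1) R ≃
      Matrix (Fin m) (Fin 1) R × Matrix (Fin n) (Fin (m + 1)) R where
  toFun p := (fun i => p.2 (Fin.natAdd n i), fun i => Fin.append (p.1 i) (p.2 (Fin.castAdd m i)))
  invFun p := (fun i j => p.2 i (Fin.castAdd 1 j),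
    fun i j => Fin.addCases (fun i => p.2 i (Fin.natAdd m j)) (fun i => p.1 i j) i)
  left_inv p := by
    refine Prod.ext (by ext i j; simp) ?_
    ext i j
    induction i using Fin.addCases <;> simp
  right_inv p := by
    refine Prod.ext (by ext i j; simp) ?_
    ext i j
    induction j using Fin.addCases <;> simp

theorem blockUpperGL_blockUpperGL {R : Type*} [CommRing R] (a : GL (Fin n) R)
    (b : GL (Fin m) R) (c : GL (Fin 1) R)
    (p : Matrix (Fin n) (Fin m) R × Matrix (Fin (n + m)) (Fin 1) R) :
    (blockUpperGL (blockUpperGL a p.1 b) p.2 c : GL (Fin (n + m + 1)) R)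
      = blockUpperGL a (upperBlocksEquiv R n m p).2
          (blockUpperGL b (upperBlocksEquiv R n m p).1 c) := by
  have split_left (i : Fin n) : Fin.castAdd (m + 1) i = Fin.castAdd 1 (Fin.castAdd m i) := rfl
  have split_middle (i : Fin m) : Fin.natAdd n (Fin.castAdd 1 i) = Fin.castAdd 1 (Fin.natAdd n i) :=
    rfl
  have split_right (i : Fin 1) : Fin.natAdd n (Fin.natAdd m i) = Fin.natAdd (n + m) i := by
    rw [Subsingleton.elim i 0]
    rfl
  have lower_blocks (i : Fin m) (j : Fin 1) :
      (upperBlocksEquiv R n m p).1 i j = p.2 (Fin.natAdd n i) j := rfl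
  refine (eq_blockUpperGL_iff (R := R) (n := n) (m := m + 1)).mpr
    ⟨fun i j => ?_, fun i j => ?_, fun i j => ?_, fun i j => ?_⟩
  · simp [split_left]
  · induction j using Fin.addCases <;> simp [*, upperBlocksEquiv]
  · induction i using Fin.addCases <;> simp [*]
  · induction i using Fin.addCases <;> induction j using Fin.addCases <;>
      simp [*]

theorem parabolicMul_assoc_one (x : GA K n) (y : GA K m) (z : GA K 1) :
    (x ⊚ y) ⊚ z = x ⊚ (y ⊚ z) := by
  induction x using MonoidAlgebra.induction_on with
  | add x x' hx hx' => simp only [map_add, LinearMap.add_apply, hx, hx']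
  | smul r x hx => simp only [map_smul, LinearMap.smul_apply, hx]
  | of a =>
    induction y using MonoidAlgebra.induction_on with
    | add y y' hy hy' => simp only [map_add, LinearMap.add_apply, hy, hy']
    | smul r y hy => simp only [map_smul, LinearMap.smul_apply, hy]
    | of b =>
      induction z using MonoidAlgebra.induction_on with
      | add z z' hz hz' => simp only [map_add, hz, hz']
      | smul r z hz => simp only [map_smul, hz]
      | of c =>
        simp only [MonoidAlgebra.of_apply, parabolicMul_single_single, expect_parabolicMul,
          parabolicMul_expect, ← Finset.expect_product', Finset.univ_product_univ]
        refine Fintype.expect_equiv (upperBlocksEquiv K n m) _ _ fun p => ?_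
        rw [blockUpperGL_blockUpperGL]

theorem paraEmb_parabolicMul [DecidableEq K] (x : GA K n) (y : GA K m) :
    paraEmb K (n + m) (x ⊚ y) = x ⊚ paraEmb K m y := by
  rw [paraEmb_eq_parabolicMul, paraEmb_eq_parabolicMul, parabolicMul_assoc_one]

theorem paraEmb_borelIdem [DecidableEq K] : paraEmb K n (borelIdem K n) = borelIdem K (n + 1) := by
  rw [paraEmb_eq_parabolicMul, parabolicMul_borelIdem_borelIdem]

end BorelIdem

/-! ### Coherent traces -/

theorem apply_single_eq_of_semiconjBy {k G M Φ : Type*} [Semiring k] [Group G]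
    [FunLike Φ (MonoidAlgebra k G) M] {φ : Φ} (hφ : ∀ x y, φ (x * y) = φ (y * x)) {s g h : G}
    (hs : SemiconjBy s g h) :
    φ (MonoidAlgebra.single g 1) = φ (MonoidAlgebra.single h 1) := by
  have conj_eq : s * g * s⁻¹ = h := by rw [hs.eq, mul_inv_cancel_right]
  have conj := hφ (MonoidAlgebra.single s⁻¹ 1) (MonoidAlgebra.single (s * g) 1)
  rwa [MonoidAlgebra.single_mul_single, MonoidAlgebra.single_mul_single, inv_mul_cancel_left,
    conj_eq, mul_one] at conj

section CoherentTrace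

variable {K : Type} [Field K] [Fintype K] [DecidableEq K]

/-- The family of functionals `f k = χ([·])` on `ℂ[GL(k,q)]` induced by a trace `χ` of `A(GLB)`. -/
structure IsCoherentTrace (f : ∀ k, GA K k →ₗ[ℂ] ℂ) : Prop where
  map_mul_comm : ∀ {k} (x y : GA K k), f k (x * y) = f k (y * x)
  map_paraEmb : ∀ {k} (x : GA K k), f (k + 1) (paraEmb K k x) = f k x
  map_star_mul_self_nonneg : ∀ {k} (x : GA K k), 0 ≤ f k (star x * x)

namespace IsCoherentTrace

variable {f : ∀ k, GA K k →ₗ[ℂ] ℂ} (hf : IsCoherentTrace f) {n m : ℕ}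
include hf

theorem map_single_eq_of_transpose_submatrix {k l : ℕ} {g : GLn K k} {h : GLn K l}
    (σ : Fin l ≃ Fin k) (hgh : h.1 = g.1ᵀ.submatrix σ σ) :
    f l (MonoidAlgebra.single h 1) = f k (MonoidAlgebra.single g 1) := by
  obtain rfl : l = k := by simpa using Fintype.card_congr σ
  obtain ⟨s, hs⟩ := exists_conj_eq_transpose g
  let P : GLn K l :=
    MonoidHom.toHomUnits (Matrix.permMatrixHom : Equiv.Perm (Fin l) →* Matrix _ _ K) σ⁻¹
  have P_semiconj : SemiconjBy P (s * g * s⁻¹) h := by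
    apply Units.ext
    rw [Units.val_mul P, Units.val_mul h, hs, hgh]
    change Equiv.Perm.permMatrix K σ⁻¹⁻¹ * g.1ᵀ = g.1ᵀ.submatrix σ σ * Equiv.Perm.permMatrix K σ⁻¹⁻¹
    rw [inv_inv, Equiv.Perm.permMatrix, PEquiv.toMatrix_toPEquiv_mul, PEquiv.mul_toMatrix_toPEquiv,
      Matrix.submatrix_submatrix]
    simp
  exact (apply_single_eq_of_semiconjBy hf.map_mul_comm
    (P_semiconj.mul_left (SemiconjBy.conj_mk s g))).symm

theorem map_mul_parabolicMul_mul_comm (y y' : GA K m) (x x' : GA K n) :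
    f (m + n) ((y * y') ⊚ (x * x')) = f (m + n) ((y' * y) ⊚ (x' * x)) := by
  rw [← parabolicMul_mul_parabolicMul, hf.map_mul_comm, parabolicMul_mul_parabolicMul]

-- Matrices are conjugate to their transposes, and transposition exchanges the two blocks.
theorem map_parabolicMul_single_comm (a : GLn K n) (b : GLn K m) :
    f (n + m) (MonoidAlgebra.single a 1 ⊚ MonoidAlgebra.single b 1)
      = f (m + n) (MonoidAlgebra.single b 1 ⊚ MonoidAlgebra.single a 1) := by
  obtain ⟨s, hs⟩ := exists_conj_eq_transpose a
  obtain ⟨t, ht⟩ := exists_conj_eq_transpose b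
  have transpose_eq (u : Matrix (Fin n) (Fin m) K) :
      f (m + n) (MonoidAlgebra.single (blockUpperGL (t * b * t⁻¹) uᵀ (s * a * s⁻¹)) 1)
        = f (n + m) (MonoidAlgebra.single (blockUpperGL a u b) 1) := by
    refine hf.map_single_eq_of_transpose_submatrix finAddFlip (Matrix.ext fun i j => ?_)
    induction i using Fin.addCases <;> induction j using Fin.addCases <;> simp [hs, ht]
  have conj_split {k : ℕ} (s g : GLn K k) : (MonoidAlgebra.single (s * g * s⁻¹) 1 : GA K k)
      = MonoidAlgebra.single s 1 * MonoidAlgebra.single (g * s⁻¹) 1 := by simp [mul_assoc]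
  calc f (n + m) (MonoidAlgebra.single a 1 ⊚ MonoidAlgebra.single b 1)
      = f (m + n)
          (MonoidAlgebra.single (t * b * t⁻¹) 1 ⊚ MonoidAlgebra.single (s * a * s⁻¹) 1) := by
        simp only [parabolicMul_single_single, addMonoidHom_map_expect]
        exact Fintype.expect_equiv (Matrix.transposeAddEquiv _ _ K).toEquiv _ _ fun u =>
          (transpose_eq u).symm
    _ = f (m + n) (MonoidAlgebra.single b 1 ⊚ MonoidAlgebra.single a 1) := by
        rw [conj_split, conj_split, hf.map_mul_parabolicMul_mul_comm]
        simp

theorem map_parabolicMul_comm (x : GA K n) (y : GA K m) :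
    f (n + m) (x ⊚ y) = f (m + n) (y ⊚ x) := by
  induction x using MonoidAlgebra.induction_on with
  | add x x' hx hx' => simp only [map_add, LinearMap.add_apply, hx, hx']
  | smul r x hx => simp only [map_smul, LinearMap.smul_apply, hx]
  | of a =>
    induction y using MonoidAlgebra.induction_on with
    | add y y' hy hy' => simp only [map_add, LinearMap.add_apply, hy, hy']
    | smul r y hy => simp only [map_smul, LinearMap.smul_apply, hy]
    | of b => exact hf.map_parabolicMul_single_comm a b

theorem map_parabolicMul_borelIdem (x : GA K n) : f (n + m) (x ⊚ borelIdem K m) = f n x := by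
  induction m with
  | zero => exact congrArg (f n) (borelIdem_zero (K := K) ▸ parabolicMul_one_zero x)
  | succ m ih =>
    rw [← paraEmb_borelIdem, ← paraEmb_parabolicMul]
    exact (hf.map_paraEmb _).trans ih

theorem map_borelIdem_parabolicMul (x : GA K n) : f (m + n) (borelIdem K m ⊚ x) = f n x := by
  rw [hf.map_parabolicMul_comm, hf.map_parabolicMul_borelIdem]

theorem map_star_mul_self_parabolicMul_nonneg (w : GA K m) (x : GA K n) :
    0 ≤ f (m + n) ((star w * w) ⊚ (star x * x)) := by
  rw [← parabolicMul_mul_parabolicMul, ← star_parabolicMul]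
  exact hf.map_star_mul_self_nonneg _

-- Centrality turns the left side into `φ (w * star w)` for the positive functional
-- `φ z = f ((e * z * e) ⊚ (star x * x))`, which is bounded by a multiple of `φ 1`.
theorem exists_map_parabolicMul_le (w : GA K m) : ∃ C : ℝ, ∀ {n : ℕ} (x : GA K n),
    f (m + n) ((star w * borelIdem K m * w) ⊚ (star x * x)) ≤ C * f n (star x * x) := by
  obtain ⟨C, -, hC⟩ := exists_apply_star_mul_self_le (star w)
  refine ⟨C, fun {n} x => ?_⟩
  let φ : GA K m →ₗ[ℂ] ℂ := f (m + n) ∘ₗ parabolicMul.flip (star x * x) ∘ₗ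
    LinearMap.mulLeft ℂ (borelIdem K m) ∘ₗ LinearMap.mulRight ℂ (borelIdem K m)
  have φ_apply (z : GA K m) :
      φ z = f (m + n) ((borelIdem K m * (z * borelIdem K m)) ⊚ (star x * x)) := rfl
  have φ_nonneg (z : GA K m) : 0 ≤ φ (star z * z) := by
    have := hf.map_star_mul_self_parabolicMul_nonneg (z * borelIdem K m) x
    rwa [star_mul, star_borelIdem, mul_assoc, ← mul_assoc (star z)] at this
  calc f (m + n) ((star w * borelIdem K m * w) ⊚ (star x * x))
      = φ (star (star w) * star w) := by
        have swap := hf.map_mul_parabolicMul_mul_comm (star (borelIdem K m * w)) (borelIdem K m * w)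
          (star x * x) 1
        rw [mul_one, one_mul] at swap
        rw [star_mul_borelIdem_mul, swap, φ_apply, star_star, star_mul, star_borelIdem]
        simp only [mul_assoc]
    _ ≤ C * φ 1 := hC φ φ_nonneg
    _ = C * f n (star x * x) := by
        rw [φ_apply, one_mul, borelIdem_mul_self, hf.map_borelIdem_parabolicMul]

theorem comp_parabolicMul {y : GA K m}
    (hy : ∀ {n} (x : GA K n), 0 ≤ f (m + n) (y ⊚ (star x * x))) :
    IsCoherentTrace fun k => f (m + k) ∘ₗ parabolicMul y where
  map_mul_comm x x' := by simpa using hf.map_mul_parabolicMul_mul_comm y 1 x x'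
  map_paraEmb x := by
    simp only [LinearMap.comp_apply, ← paraEmb_parabolicMul]
    exact hf.map_paraEmb _
  map_star_mul_self_nonneg := hy

end IsCoherentTrace

end CoherentTrace

/-! ### Coprime characteristic polynomials -/

section Sylvester

variable {R n m : Type*} [Fintype n] [DecidableEq n] [Fintype m] [DecidableEq m]

theorem aeval_mul_eq_mul_aeval [CommRing R] {a : Matrix n n R} {b : Matrix m m R}
    {X : Matrix n m R} (h : a * X = X * b) (p : Polynomial R) :
    Polynomial.aeval a p * X = X * Polynomial.aeval b p := by
  have pow_comm (k : ℕ) : a ^ k * X = X * b ^ k := by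
    induction k with
    | zero => simp
    | succ k ih => rw [pow_succ, pow_succ, Matrix.mul_assoc, h, ← Matrix.mul_assoc, ih,
        Matrix.mul_assoc]
  induction p using Polynomial.induction_on' with
  | add p q hp hq => simp only [map_add, Matrix.add_mul, Matrix.mul_add, hp, hq]
  | monomial k r => simp only [Polynomial.aeval_monomial, ← Algebra.smul_def, Matrix.smul_mul,
      Matrix.mul_smul, pow_comm]

theorem eq_zero_of_mul_eq_mul_of_isCoprime_charpoly [CommRing R] {a : Matrix n n R}
    {b : Matrix m m R} (hab : IsCoprime a.charpoly b.charpoly) {X : Matrix n m R}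
    (h : a * X = X * b) : X = 0 := by
  obtain ⟨p, q, hpq⟩ := hab
  calc X = X * Polynomial.aeval b (p * a.charpoly + q * b.charpoly) := by rw [hpq]; simp
    _ = X * Polynomial.aeval b (p * a.charpoly) := by simp [Matrix.aeval_self_charpoly]
    _ = Polynomial.aeval a (p * a.charpoly) * X := (aeval_mul_eq_mul_aeval h _).symm
    _ = 0 := by simp [Matrix.aeval_self_charpoly]

theorem exists_mul_sub_mul_eq_of_isCoprime_charpoly [Field R] {a : Matrix n n R}
    {b : Matrix m m R} (hab : IsCoprime a.charpoly b.charpoly) (u : Matrix n m R) :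
    ∃ X : Matrix n m R, X * b - a * X = u := by
  let T : Matrix n m R →ₗ[R] Matrix n m R := mulRightLinearMap n R b - mulLeftLinearMap m R a
  have T_injective : Function.Injective T :=
    (injective_iff_map_eq_zero T).mpr fun X hX =>
      eq_zero_of_mul_eq_mul_of_isCoprime_charpoly hab (sub_eq_zero.mp hX).symm
  exact LinearMap.injective_iff_surjective.mp T_injective u

end Sylvester

section CoprimeBlocks

variable {K : Type} [Field K] {n m : ℕ}

theorem exists_semiconjBy_blockDiagGL_blockUpperGL {a : GLn K n} {b : GLn K m}
    (hab : IsCoprime a.1.charpoly b.1.charpoly) (u : Matrix (Fin n) (Fin m) K) :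
    ∃ s, SemiconjBy s (blockDiagGL K a b) (blockUpperGL a u b) := by
  obtain ⟨X, rfl⟩ := exists_mul_sub_mul_eq_of_isCoprime_charpoly hab u
  refine ⟨blockUpperGL 1 X 1, ?_⟩
  rw [SemiconjBy, ← blockUpperGL_zero, blockUpperGL_mul, blockUpperGL_mul]
  simp

theorem IsCoherentTrace.map_single_blockDiagGL [Fintype K] [DecidableEq K]
    {f : ∀ k, GA K k →ₗ[ℂ] ℂ} (hf : IsCoherentTrace f) {a : GLn K n} {b : GLn K m}
    (hab : IsCoprime a.1.charpoly b.1.charpoly) :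
    f (n + m) (MonoidAlgebra.single (blockDiagGL K a b) 1)
      = f (n + m) (MonoidAlgebra.single a 1 ⊚ MonoidAlgebra.single b 1) := by
  have conjugate (u : Matrix (Fin n) (Fin m) K) :
      f (n + m) (MonoidAlgebra.single (blockUpperGL a u b) 1)
        = f (n + m) (MonoidAlgebra.single (blockDiagGL K a b) 1) := by
    obtain ⟨s, hs⟩ := exists_semiconjBy_blockDiagGL_blockUpperGL hab u
    exact (apply_single_eq_of_semiconjBy hf.map_mul_comm hs).symm
  simp only [parabolicMul_single_single, addMonoidHom_map_expect, conjugate, Fintype.expect_const]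

end CoprimeBlocks

/-! ### Extreme traces -/

theorem exists_linearMap_lift_of_nat_chain {R A N : Type*} {M : ℕ → Type*} [Ring R]
    [∀ n, AddCommGroup (M n)] [∀ n, Module R (M n)] [AddCommGroup A] [Module R A]
    [AddCommGroup N] [Module R N] (j : ∀ n, M n →ₗ[R] M (n + 1)) {ι : ∀ n, M n →ₗ[R] A}
    (ι_comp : ∀ n x, ι (n + 1) (j n x) = ι n x) (ι_injective : ∀ n, Function.Injective (ι n))
    (ι_exhaust : ∀ z, ∃ n x, ι n x = z) {g : ∀ n, M n →ₗ[R] N}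
    (g_comp : ∀ n x, g (n + 1) (j n x) = g n x) :
    ∃ ψ : A →ₗ[R] N, ∀ n x, ψ (ι n x) = g n x := by
  let Γ (n : ℕ) : Submodule R (A × N) := LinearMap.range ((ι n).prod (g n))
  have Γ_mono : Monotone Γ := monotone_nat_of_le_succ fun n => by
    rintro _ ⟨x, rfl⟩
    exact ⟨j n x, Prod.ext (ι_comp n x) (g_comp n x)⟩
  have mem_Γ (n : ℕ) (x : M n) : (ι n x, g n x) ∈ ⨆ n, Γ n :=
    Submodule.mem_iSup_of_mem n ⟨x, rfl⟩
  have fst_bijective : Function.Bijective (Prod.fst ∘ (⨆ n, Γ n).subtype) := by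
    constructor
    · refine (injective_iff_map_eq_zero (LinearMap.fst R A N ∘ₗ (⨆ n, Γ n).subtype)).mpr ?_
      rintro ⟨p, hp⟩ p_fst
      obtain ⟨n, x, rfl⟩ := (Submodule.mem_iSup_of_directed Γ Γ_mono.directed_le).mp hp
      obtain rfl : x = 0 := ι_injective n (p_fst.trans (map_zero _).symm)
      simp
    · intro z
      obtain ⟨n, x, rfl⟩ := ι_exhaust z
      exact ⟨⟨_, mem_Γ n x⟩, rfl⟩
  obtain ⟨ψ, hψ⟩ := Submodule.exists_eq_graph fst_bijective
  exact ⟨ψ, fun n x => ((LinearMap.mem_graph_iff ψ _).mp (hψ ▸ mem_Γ n x)).symm⟩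

section ExtremeTrace

variable {A : Type} [NonUnitalRing A] [Module ℂ A] [StarRing A] {χ ψ : A →ₗ[ℂ] ℂ}

theorem IsTrace.smul (hψ : IsTrace ψ) {c : ℝ} (hc : 0 ≤ c) : IsTrace ((c : ℂ) • ψ) := by
  refine ⟨fun x y => ?_, fun x => ?_⟩
  · simp only [LinearMap.smul_apply, hψ.1 x y]
  · exact mul_nonneg (Complex.zero_le_real.mpr hc) (hψ.2 x)

theorem IsExtremeTrace.exists_eq_smul_of_le (hχ : IsExtremeTrace χ) (hψ : IsTrace ψ) {C : ℝ}
    (hle : ∀ x, ψ (star x * x) ≤ C * χ (star x * x)) : ∃ c : ℂ, ψ = c • χ := by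
  have hD : 0 < |C| + 1 := by positivity
  have hD' : ((|C| + 1 : ℝ) : ℂ) ≠ 0 := Complex.ofReal_ne_zero.mpr hD.ne'
  have scaled_le (x : A) : ((|C| + 1)⁻¹ : ℝ) * ψ (star x * x) ≤ χ (star x * x) := by
    rw [Complex.ofReal_inv, inv_mul_le_iff₀ (Complex.zero_lt_real.mpr hD)]
    refine (hle x).trans (mul_le_mul_of_nonneg_right ?_ (hχ.1.2 x))
    exact Complex.real_le_real.mpr ((le_abs_self C).trans (le_add_of_nonneg_right zero_le_one))
  have scaled_isTrace := hψ.smul (inv_nonneg.mpr hD.le)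
  have complement_isTrace : IsTrace (χ - (((|C| + 1)⁻¹ : ℝ) : ℂ) • ψ) := by
    refine ⟨fun x y => ?_, fun x => sub_nonneg.mpr (scaled_le x)⟩
    simp only [LinearMap.sub_apply, hχ.1.1 x y, scaled_isTrace.1 x y]
  obtain ⟨c, -, -, -, hc, -⟩ := hχ.2.2 _ _ scaled_isTrace complement_isTrace (by abel)
  refine ⟨(|C| + 1 : ℝ) * c, ?_⟩
  rw [mul_smul, ← hc, Complex.ofReal_inv, smul_inv_smul₀ hD']

end ExtremeTrace

section ParabolicLimit

variable {K : Type} [Field K] [Fintype K] [DecidableEq K] {A : Type} [NonUnitalRing A]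
  [Module ℂ A] [StarRing A]

/-- `(A, ι)` is a realization of `A(GLB)`, with `ι n a = [a]`. -/
structure IsParabolicLimit (ι : ∀ n, GA K n →ₗ[ℂ] A) : Prop where
  map_paraEmb : ∀ n x, ι (n + 1) (paraEmb K n x) = ι n x
  map_mul : ∀ n x y, ι n (x * y) = ι n x * ι n y
  injective : ∀ n, Function.Injective (ι n)
  exists_apply_eq : ∀ z, ∃ n x, ι n x = z
  star_map_single : ∀ n g,
    star (ι n (MonoidAlgebra.single g 1)) = ι n (MonoidAlgebra.single g⁻¹ 1)

/-- A coherent trace normalized by `χ(I_B) = 1` and extreme. Extremality is expressed by the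
property that every coherent trace dominated by a multiple of `f` is proportional to `f`. -/
structure IsExtremeCoherentTrace (f : ∀ k, GA K k →ₗ[ℂ] ℂ) : Prop extends IsCoherentTrace f where
  map_one : f 0 1 = 1
  exists_eq_mul_of_le : ∀ {g : ∀ k, GA K k →ₗ[ℂ] ℂ}, IsCoherentTrace g → ∀ {C : ℝ},
    (∀ {k} (x : GA K k), g k (star x * x) ≤ C * f k (star x * x)) → ∃ c, ∀ k x, g k x = c * f k x

namespace IsParabolicLimit

variable {ι : ∀ n, GA K n →ₗ[ℂ] A} (hι : IsParabolicLimit ι)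
include hι

theorem range_mono : Monotone fun n => LinearMap.range (ι n) :=
  monotone_nat_of_le_succ fun n => by
    rintro _ ⟨x, rfl⟩
    exact ⟨_, hι.map_paraEmb n x⟩

theorem exists_apply_eq_apply_eq (u v : A) : ∃ n x y, ι n x = u ∧ ι n y = v := by
  obtain ⟨k, x, rfl⟩ := hι.exists_apply_eq u
  obtain ⟨l, y, rfl⟩ := hι.exists_apply_eq v
  obtain ⟨x', hx'⟩ := hι.range_mono (le_max_left k l) ⟨x, rfl⟩
  obtain ⟨y', hy'⟩ := hι.range_mono (le_max_right k l) ⟨y, rfl⟩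
  exact ⟨_, x', y', hx', hy'⟩

variable [StarModule ℂ A]

theorem star_map (n : ℕ) (x : GA K n) : star (ι n x) = ι n (star x) := by
  induction x using MonoidAlgebra.induction_on with
  | add x y hx hy => simp only [map_add, star_add, hx, hy]
  | smul r x hx => simp only [map_smul, star_smul, hx]
  | of g => rw [MonoidAlgebra.of_apply, hι.star_map_single, star_single, star_one]

theorem map_star_mul_self (n : ℕ) (x : GA K n) : ι n (star x * x) = star (ι n x) * ι n x := by
  rw [hι.map_mul, hι.star_map]

theorem isCoherentTrace {χ : A →ₗ[ℂ] ℂ} (hχ : IsTrace χ) :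
    IsCoherentTrace fun n => χ ∘ₗ ι n where
  map_mul_comm x y := by simp only [LinearMap.comp_apply, hι.map_mul, hχ.1 (ι _ x)]
  map_paraEmb x := congrArg χ (hι.map_paraEmb _ x)
  map_star_mul_self_nonneg x := by simpa [hι.map_star_mul_self] using hχ.2 (ι _ x)

theorem exists_isTrace_map_eq {g : ∀ k, GA K k →ₗ[ℂ] ℂ} (hg : IsCoherentTrace g) :
    ∃ ψ : A →ₗ[ℂ] ℂ, IsTrace ψ ∧ ∀ k x, ψ (ι k x) = g k x := by
  obtain ⟨ψ, hψ⟩ := exists_linearMap_lift_of_nat_chain (paraEmb K) hι.map_paraEmb hι.injective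
    hι.exists_apply_eq fun _ => hg.map_paraEmb
  refine ⟨ψ, ⟨fun u v => ?_, fun u => ?_⟩, hψ⟩
  · obtain ⟨k, x, y, rfl, rfl⟩ := hι.exists_apply_eq_apply_eq u v
    rw [← hι.map_mul, ← hι.map_mul, hψ, hψ, hg.map_mul_comm]
  · obtain ⟨k, x, rfl⟩ := hι.exists_apply_eq u
    rw [← hι.map_star_mul_self, hψ]
    exact hg.map_star_mul_self_nonneg x

theorem isExtremeCoherentTrace {χ : A →ₗ[ℂ] ℂ} (hχ : IsExtremeTrace χ) (hnorm : χ (ι 0 1) = 1) :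
    IsExtremeCoherentTrace fun n => χ ∘ₗ ι n where
  toIsCoherentTrace := hι.isCoherentTrace hχ.1
  map_one := hnorm
  exists_eq_mul_of_le {g} hg C hle := by
    obtain ⟨ψ, ψ_isTrace, hψ⟩ := hι.exists_isTrace_map_eq hg
    have ψ_le (u : A) : ψ (star u * u) ≤ C * χ (star u * u) := by
      obtain ⟨k, x, rfl⟩ := hι.exists_apply_eq u
      rw [← hι.map_star_mul_self, hψ]
      exact hle x
    obtain ⟨c, rfl⟩ := hχ.exists_eq_smul_of_le ψ_isTrace ψ_le
    exact ⟨c, fun k x => (hψ k x).symm⟩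

end IsParabolicLimit

namespace IsExtremeCoherentTrace

variable {f : ∀ k, GA K k →ₗ[ℂ] ℂ} (hf : IsExtremeCoherentTrace f) {n m : ℕ}
include hf

theorem map_star_mul_borelIdem_mul_parabolicMul (w : GA K m) (x : GA K n) :
    f (m + n) ((star w * borelIdem K m * w) ⊚ x)
      = f m (star w * borelIdem K m * w) * f n x := by
  obtain ⟨C, hC⟩ := hf.exists_map_parabolicMul_le w
  have nonneg {k : ℕ} (x : GA K k) :
      0 ≤ f (m + k) ((star w * borelIdem K m * w) ⊚ (star x * x)) := by
    rw [star_mul_borelIdem_mul]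
    exact hf.map_star_mul_self_parabolicMul_nonneg _ x
  obtain ⟨c, hc⟩ := hf.exists_eq_mul_of_le (hf.comp_parabolicMul nonneg) hC
  have c_eq : f m (star w * borelIdem K m * w) = c := by
    have := hc 0 1
    rwa [LinearMap.comp_apply, parabolicMul_one_zero, hf.map_one, mul_one] at this
  rw [c_eq]
  exact hc n x

theorem map_parabolicMul_of_mem_span_borelIdem {y : GA K m}
    (hy : y ∈ TwoSidedIdeal.span {borelIdem K m}) (x : GA K n) :
    f (m + n) (y ⊚ x) = f m y * f n x := by
  let φ : GA K m →ₗ[ℂ] ℂ := f (m + n) ∘ₗ parabolicMul.flip x - f n x • f m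
  have φ_apply (z : GA K m) : φ z = f (m + n) (z ⊚ x) - f n x * f m z := rfl
  have φ_diagonal (w : GA K m) : φ (star w * borelIdem K m * w) = 0 := by
    rw [φ_apply, hf.map_star_mul_borelIdem_mul_parabolicMul, mul_comm, sub_self]
  have φ_ideal := eq_zero_of_mem_twoSidedIdealSpan_singleton φ.toAddMonoidHom
    (apply_mul_mul_eq_zero_of_apply_star_mul_mul_self φ_diagonal) hy
  rw [mul_comm]
  exact sub_eq_zero.mp φ_ideal

end IsExtremeCoherentTrace

end ParabolicLimit

/-! ### Row echelon form and the Bruhat argument -/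

theorem exists_linearIndepOn_forall_mem_span_image_le {K V ι : Type*} [DivisionRing K]
    [AddCommGroup V] [Module K V] [LinearOrder ι] (c : ι → V) (s : Finset ι) :
    ∃ t ⊆ s, LinearIndepOn K c (t : Set ι) ∧
      ∀ i ∈ s, c i ∈ Submodule.span K (c '' {j ∈ t | j ≤ i}) := by
  induction s using Finset.induction_on_max with
  | empty => exact ⟨∅, subset_rfl, by simp, by simp⟩
  | insert a s lt_a ih =>
    obtain ⟨t, t_sub, indep, spans⟩ := ih
    by_cases mem_span : c a ∈ Submodule.span K (c '' t)
    · refine ⟨t, t_sub.trans (Finset.subset_insert a s), indep,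
        (Finset.forall_mem_insert ..).mpr ⟨?_, spans⟩⟩
      refine Submodule.span_mono (Set.image_mono fun j hj => ?_) mem_span
      exact ⟨hj, (lt_a j (t_sub hj)).le⟩
    · have notMem : a ∉ (t : Set ι) := fun h => (lt_a a (t_sub h)).false
      refine ⟨insert a t, Finset.insert_subset_insert a t_sub, ?_,
        (Finset.forall_mem_insert ..).mpr ⟨?_, fun i hi => ?_⟩⟩
      · rw [Finset.coe_insert, linearIndepOn_insert notMem]
        exact ⟨indep, mem_span⟩
      · exact Submodule.subset_span ⟨a, ⟨Finset.mem_insert_self a t, le_rfl⟩, rfl⟩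
      · refine Submodule.span_mono (Set.image_mono fun j hj => ?_) (spans i hi)
        exact ⟨Finset.mem_insert_of_mem hj.1, hj.2⟩

theorem exists_orderEmbedding_basis_repr_eq_zero {K V ι : Type*} [Field K] [AddCommGroup V]
    [Module K V] [LinearOrder ι] [Finite ι] {d : ℕ} (hd : Module.finrank K V = d) (c : ι → V)
    (hc : Submodule.span K (Set.range c) = ⊤) :
    ∃ (τ : Fin d ↪o ι) (β : Module.Basis (Fin d) K V),
      (∀ r, β r = c (τ r)) ∧ ∀ s j, j < τ s → β.repr (c j) s = 0 := by
  cases nonempty_fintype ι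
  obtain ⟨t, -, indep, spans⟩ :=
    exists_linearIndepOn_forall_mem_span_image_le (K := K) c Finset.univ
  have span_eq_top : Submodule.span K (c '' t) = ⊤ := by
    rw [← top_le_iff, ← hc, Submodule.span_le]
    rintro _ ⟨i, rfl⟩
    exact Submodule.span_mono (Set.image_mono (Set.sep_subset _ _)) (spans i (Finset.mem_univ i))
  have card_t : t.card = d := by
    have := finrank_span_eq_card indep
    rw [← Set.image_eq_range, span_eq_top, finrank_top, hd] at this
    simpa using this.symm
  let τ := t.orderEmbOfFin card_t
  have image_eq : c '' t = Set.range (c ∘ τ) := by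
    rw [Set.range_comp, Finset.range_orderEmbOfFin]
  let β : Module.Basis (Fin d) K V :=
    .mk (indep.comp (fun r => ⟨τ r, t.orderEmbOfFin_mem card_t r⟩)
      fun _ _ h => τ.injective (Subtype.ext_iff.mp h)) (image_eq ▸ span_eq_top.ge)
  have β_apply (r : Fin d) : β r = c (τ r) := Module.Basis.mk_apply _ _ r
  refine ⟨τ, β, β_apply, fun s j hj => by_contra fun h => ?_⟩
  have image_subset : c '' {i ∈ t | i ≤ j} ⊆ β '' {r | τ r ≤ j} := by
    rintro _ ⟨i, ⟨hi, hij⟩, rfl⟩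
    obtain ⟨r, rfl⟩ := (Finset.range_orderEmbOfFin t card_t).ge hi
    exact ⟨r, hij, β_apply r⟩
  exact hj.not_ge <| β.repr_support_subset_of_mem_span _
    (Submodule.span_mono image_subset (spans j (Finset.mem_univ j))) (Finsupp.mem_support_iff.mpr h)

theorem exists_eq_mul_submatrix_eq_one {K : Type*} [Field K] {m : ℕ} {ι : Type*} [LinearOrder ι]
    [Finite ι] (C : Matrix (Fin m) ι K) (hC : Submodule.span K (Set.range C.col) = ⊤) :
    ∃ (D : GL (Fin m) K) (E : Matrix (Fin m) ι K) (τ : Fin m ↪o ι),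
      C = D.1 * E ∧ E.submatrix id τ = 1 ∧ ∀ s j, j < τ s → E s j = 0 := by
  obtain ⟨τ, β, β_apply, repr_eq_zero⟩ :=
    exists_orderEmbedding_basis_repr_eq_zero (Module.finrank_fin_fun K) C.col hC
  let D : GL (Fin m) K :=
    ⟨(Pi.basisFun K (Fin m)).toMatrix β, β.toMatrix (Pi.basisFun K (Fin m)),
      Module.Basis.toMatrix_mul_toMatrix_flip _ _, Module.Basis.toMatrix_mul_toMatrix_flip _ _⟩
  refine ⟨D, β.toMatrix C.col, τ, ?_, ?_, repr_eq_zero⟩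
  · rw [Module.Basis.toMatrix_mul_toMatrix]
    rfl
  · rw [← β.toMatrix_self]
    ext r s
    rw [Matrix.submatrix_apply, Module.Basis.toMatrix_apply, Module.Basis.toMatrix_apply, β_apply,
      id]

theorem blockTriangular_submatrix_one_mul_mul {K : Type*} [CommRing K] {κ ι : Type*}
    [LinearOrder κ] [Fintype κ] [LinearOrder ι] {τ : κ ↪o ι} {M : Matrix κ κ K}
    {E : Matrix κ ι K} (hM : M.BlockTriangular id) (hE : ∀ s j, j < τ s → E s j = 0) :
    ((1 : Matrix ι ι K).submatrix id τ * M * E).BlockTriangular id := by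
  intro i j hij
  rw [Matrix.mul_assoc, Matrix.mul_apply]
  refine Finset.sum_eq_zero fun r _ => ?_
  by_cases hir : i = τ r
  · rw [Matrix.mul_apply, Finset.sum_eq_zero, mul_zero]
    intro s _
    rcases lt_or_ge s r with hsr | hrs
    · rw [hM hsr, zero_mul]
    · rw [hE s j ((hir ▸ hij).trans_le (τ.monotone hrs)), mul_zero]
  · rw [Matrix.submatrix_apply, id, Matrix.one_apply_ne hir, zero_mul]

section Bruhat

variable {K : Type*} [Field K] {n m : ℕ} {l : Type*}

theorem blockUpperGL_mul_eq_iff {a : GL (Fin n) K} {u : Matrix (Fin n) (Fin m) K}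
    {b : GL (Fin m) K} {M N : Matrix (Fin (n + m)) l K} :
    (blockUpperGL a u b).1 * M = N ↔
      a.1 * M.submatrix (Fin.castAdd m) id + u * M.submatrix (Fin.natAdd n) id
          = N.submatrix (Fin.castAdd m) id ∧
        b.1 * M.submatrix (Fin.natAdd n) id = N.submatrix (Fin.natAdd n) id := by
  simp [← Matrix.ext_iff, Fin.forall_fin_add, Matrix.mul_apply, Fin.sum_univ_add]

theorem span_range_col_submatrix_natAdd (g : GL (Fin (n + m)) K) :
    Submodule.span K (Set.range (g.1.submatrix (Fin.natAdd n) id).col) = ⊤ := by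
  have right_inverse : g.1.submatrix (Fin.natAdd n) id * g⁻¹.1.submatrix id (Fin.natAdd n)
      = (1 : Matrix (Fin m) (Fin m) K) := by
    rw [← Matrix.submatrix_mul _ _ _ _ _ Function.bijective_id, Units.mul_inv,
      Matrix.submatrix_one _ (Fin.natAdd_injective m n)]
  rw [← Matrix.range_mulVecLin, LinearMap.range_eq_top]
  intro y
  exact ⟨g⁻¹.1.submatrix id (Fin.natAdd n) *ᵥ y, by
    rw [Matrix.mulVecLin_apply, Matrix.mulVec_mulVec, right_inverse, Matrix.one_mulVec]⟩

-- Write the lower rows of `g` as `D * E` with `E` in echelon form. Since `E * S = 1`, where `S`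
-- selects the pivot columns, `b = 1 + S * (t - 1) * E` satisfies `E * b = t * E`, and `b` is
-- triangular because `E` vanishes to the left of its pivots.
theorem exists_forall_isUT_mul_eq_blockUpperGL_mul {K : Type} [Field K] {n m : ℕ}
    (g : GLn K (n + m)) : ∃ D : GLn K m, ∀ t, IsUT K t → ∃ X, ∃ b, IsUT K b ∧
      g * b = blockUpperGL 1 X (D * t * D⁻¹) * g := by
  set C := g.1.submatrix (Fin.natAdd n) id
  obtain ⟨D, E, τ, C_eq, E_pivots, E_zero⟩ :=
    exists_eq_mul_submatrix_eq_one C (span_range_col_submatrix_natAdd g)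
  refine ⟨D, fun t ht => ?_⟩
  set A := g.1.submatrix (Fin.castAdd m) id
  set S : Matrix (Fin (n + m)) (Fin m) K := (1 : Matrix _ _ K).submatrix id τ
  set X := A * S * (t.1 - 1) * D⁻¹.1
  set B := 1 + S * (t.1 - 1) * E
  have mul_B {k : ℕ} (M : Matrix (Fin k) (Fin (n + m)) K) :
      M * B = M + M * S * (t.1 - 1) * E := by
    rw [Matrix.mul_add, Matrix.mul_one]
    simp only [Matrix.mul_assoc]
  have E_mul_S : E * S = 1 := by
    rw [← E_pivots]
    ext r s
    simp [S, Matrix.mul_apply, Matrix.one_apply]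
  have inv_mul_C : D⁻¹.1 * C = E := by rw [C_eq, ← Matrix.mul_assoc, Units.inv_mul, Matrix.one_mul]
  have key : (blockUpperGL 1 X (D * t * D⁻¹)).1 * g.1 = g.1 * B := by
    refine blockUpperGL_mul_eq_iff.mpr ⟨?_, ?_⟩
    · calc (1 : GL (Fin n) K).1 * A + X * C
          = A + A * S * (t.1 - 1) * (D⁻¹.1 * C) := by
            rw [Units.val_one, Matrix.one_mul, Matrix.mul_assoc _ _ C]
        _ = A * B := by rw [inv_mul_C, mul_B]
    · calc D.1 * t.1 * D⁻¹.1 * C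
          = D.1 * (E + E * S * (t.1 - 1) * E) := by
            rw [Matrix.mul_assoc _ _ C, inv_mul_C, E_mul_S, Matrix.one_mul, Matrix.sub_mul,
              Matrix.one_mul, add_sub_cancel, Matrix.mul_assoc]
        _ = C * B := by
            rw [mul_B, C_eq, Matrix.mul_add]
            simp only [Matrix.mul_assoc]
  have B_triangular : B.BlockTriangular id :=
    Matrix.blockTriangular_one.add (blockTriangular_submatrix_one_mul_mul
      (Matrix.BlockTriangular.sub ht Matrix.blockTriangular_one) E_zero)
  refine ⟨X, g⁻¹ * (blockUpperGL 1 X (D * t * D⁻¹) * g), ?_, mul_inv_cancel_left _ _⟩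
  have : (g⁻¹ * (blockUpperGL 1 X (D * t * D⁻¹) * g)).1 = B := by
    rw [Units.val_mul, Units.val_mul, key, ← Matrix.mul_assoc, Units.inv_mul, Matrix.one_mul]
  exact fun i j hij => this ▸ B_triangular hij

end Bruhat

/-! ### Unipotent traces -/

section UnipotentFunctional

variable {K : Type} [Field K] {n d : ℕ}

theorem charFun_eq_trace_asAlgebraHom (ρ : Representation ℂ (GLn K n) (Fin d → ℂ)) (z : GA K n) :
    charFun K ρ z = LinearMap.trace ℂ (Fin d → ℂ) (ρ.asAlgebraHom z) := by
  simp [charFun, Representation.asAlgebraHom_def, MonoidAlgebra.lift_apply, Finsupp.sum]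

variable [Finite K]

theorem asAlgebraHom_borelIdem_apply {ρ : Representation ℂ (GLn K n) (Fin d → ℂ)} {v : Fin d → ℂ}
    (hv : ∀ b, IsUT K b → ρ b v = v) : ρ.asAlgebraHom (borelIdem K n) v = v := by
  have map_expect := addMonoidHom_map_expect
    ((LinearMap.applyₗ v ∘ₗ ρ.asAlgebraHom.toLinearMap).toAddMonoidHom) Finset.univ
    fun b : borelSubgroup K n => MonoidAlgebra.single b.1 (1 : ℂ)
  refine map_expect.trans ?_
  refine (Finset.expect_congr rfl fun b _ => ?_).trans (Fintype.expect_const v)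
  simpa using hv b.1 b.2

theorem IsUnipotentIrrep.asAlgebraHom_eq_zero {ρ : Representation ℂ (GLn K n) (Fin d → ℂ)}
    (hρ : IsUnipotentIrrep K ρ) {z : GA K n}
    (hz : ∀ g, z * MonoidAlgebra.single g 1 * borelIdem K n = 0) : ρ.asAlgebraHom z = 0 := by
  obtain ⟨irreducible, v, v_ne_zero, v_invariant⟩ := hρ
  let W : Submodule ℂ (Fin d → ℂ) := ⨅ g, LinearMap.ker (ρ.asAlgebraHom z * ρ g)
  have mem_W {w : Fin d → ℂ} : w ∈ W ↔ ∀ g, ρ.asAlgebraHom z (ρ g w) = 0 := by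
    simp [W]
  have v_mem : v ∈ W := mem_W.mpr fun g => by
    calc ρ.asAlgebraHom z (ρ g v)
        = ρ.asAlgebraHom (z * MonoidAlgebra.single g 1 * borelIdem K n) v := by
          simp [asAlgebraHom_borelIdem_apply v_invariant]
      _ = 0 := by rw [hz, map_zero, LinearMap.zero_apply]
  have W_eq_top : W = ⊤ := by
    refine (irreducible W fun h w hw => mem_W.mpr fun g => ?_).resolve_left fun W_eq_bot =>
      v_ne_zero ((Submodule.mem_bot ℂ).mp (W_eq_bot ▸ v_mem))
    simpa using mem_W.mp hw (g * h)
  refine LinearMap.ext fun w => ?_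
  have : w ∈ W := W_eq_top ▸ Submodule.mem_top
  simpa using mem_W.mp this 1

theorem IsUnipotentFunctional.eq_zero_of_mul_borelIdem {φ : GA K n → ℂ}
    (hφ : IsUnipotentFunctional K φ) {z : GA K n}
    (hz : ∀ g, z * MonoidAlgebra.single g 1 * borelIdem K n = 0) : φ z = 0 := by
  obtain ⟨k, c, d, ρ, hρ, φ_eq⟩ := hφ
  rw [φ_eq]
  refine Finset.sum_eq_zero fun i _ => ?_
  rw [charFun_eq_trace_asAlgebraHom, (hρ i).asAlgebraHom_eq_zero hz, map_zero, mul_zero]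

end UnipotentFunctional

section Multiplicativity

variable {K : Type} [Field K] [Fintype K] {n m : ℕ}

theorem parabolicMul_mul_single_mul_borelIdem_eq_zero (x : GA K n) {k : GA K m}
    (hk : ∀ w, k * w * borelIdem K m = 0) (g : GLn K (n + m)) :
    (x ⊚ k) * MonoidAlgebra.single g 1 * borelIdem K (n + m) = 0 := by
  obtain ⟨D, hD⟩ := exists_forall_isUT_mul_eq_blockUpperGL_mul g
  have single_mul (g h : GLn K (n + m)) : MonoidAlgebra.single (g * h) (1 : ℂ)
      = MonoidAlgebra.single g 1 * MonoidAlgebra.single h 1 := by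
    rw [MonoidAlgebra.single_mul_single, mul_one]
  have absorb (t : borelSubgroup K m) :
      (x ⊚ k) * MonoidAlgebra.single g 1 * borelIdem K (n + m)
        = x ⊚ (k * (MonoidAlgebra.single D 1 * MonoidAlgebra.single t.1 1
            * MonoidAlgebra.single D⁻¹ 1)) * MonoidAlgebra.single g 1 * borelIdem K (n + m) := by
    obtain ⟨X, b, hb, hgb⟩ := hD t.1 t.2
    calc (x ⊚ k) * MonoidAlgebra.single g 1 * borelIdem K (n + m)
        = (x ⊚ k) * MonoidAlgebra.single (g * b) 1 * borelIdem K (n + m) := by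
          rw [single_mul, mul_assoc, mul_assoc, mul_assoc, single_mul_borelIdem hb]
      _ = (x ⊚ k) * MonoidAlgebra.single (blockUpperGL 1 X (D * t * D⁻¹)) 1
            * MonoidAlgebra.single g 1 * borelIdem K (n + m) := by
          rw [hgb, single_mul, ← mul_assoc (x ⊚ k)]
      _ = _ := by
          rw [parabolicMul_mul_single, ← MonoidAlgebra.one_def, mul_one]
          simp only [MonoidAlgebra.single_mul_single, mul_one]
  calc (x ⊚ k) * MonoidAlgebra.single g 1 * borelIdem K (n + m)
      = 𝔼 t : borelSubgroup K m, x ⊚ (k * (MonoidAlgebra.single D 1 * MonoidAlgebra.single t.1 1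
            * MonoidAlgebra.single D⁻¹ 1)) * MonoidAlgebra.single g 1 * borelIdem K (n + m) := by
        simp only [← absorb, Fintype.expect_const]
    _ = x ⊚ (k * MonoidAlgebra.single D 1 * borelIdem K m * MonoidAlgebra.single D⁻¹ 1)
          * MonoidAlgebra.single g 1 * borelIdem K (n + m) := by
        simp only [borelIdem_eq_expect (m := m), Finset.mul_expect, Finset.expect_mul,
          parabolicMul_expect, mul_assoc]
    _ = 0 := by rw [hk, zero_mul, map_zero, zero_mul, zero_mul]

theorem IsExtremeCoherentTrace.map_parabolicMul [DecidableEq K]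
    {f : ∀ k, GA K k →ₗ[ℂ] ℂ} (hf : IsExtremeCoherentTrace f)
    (hunip : ∀ k, IsUnipotentFunctional K (f k)) (x : GA K n) (y : GA K m) :
    f (n + m) (x ⊚ y) = f n x * f m y := by
  obtain ⟨j, k, rfl, hj, hk⟩ := exists_eq_add_mem_span_and_mul_mul_eq_zero (borelIdem K m) y
  have map_j : f (n + m) (x ⊚ j) = f n x * f m j := by
    rw [hf.map_parabolicMul_comm, hf.map_parabolicMul_of_mem_span_borelIdem hj, mul_comm]
  have map_parabolicMul_k : f (n + m) (x ⊚ k) = 0 :=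
    (hunip (n + m)).eq_zero_of_mul_borelIdem (parabolicMul_mul_single_mul_borelIdem_eq_zero x hk)
  have map_k : f m k = 0 := (hunip m).eq_zero_of_mul_borelIdem fun g => hk _
  rw [map_add, map_add, map_add, map_j, map_parabolicMul_k, map_k, add_zero, add_zero]

end Multiplicativity

/-- **Multiplicativity theorem for unipotent traces** (Theorem 3.3).
Here `A`, together with the compatible system `ι` of injective multiplicative linear maps
from the group algebras `ℂ[GL(n,q)]` (along the parabolic embeddings) whose images exhaust `A`,
realizes the Schwartz–Bruhat algebra `A(GLB)` with its canonical involution; `χ` is an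
extreme unipotent trace normalized by `χ(I_B) = 1`. If `a ∈ GL(n,q)` and `b ∈ GL(m,q)` have
coprime characteristic polynomials then `χ([e_{a⊙b}]) = χ([e_a])·χ([e_b])`. -/
theorem multiplicativity_of_unipotent_traces
    (A : Type) [NonUnitalRing A] [Module ℂ A] [SMulCommClass ℂ A A] [IsScalarTower ℂ A A]
    [StarRing A] [StarModule ℂ A]
    (ι : ∀ n : ℕ, GA F n →ₗ[ℂ] A)
    (hcomp : ∀ n : ℕ, (ι (n + 1)).comp (paraEmb F n) = ι n)
    (hmul : ∀ (n : ℕ) (a b : GA F n), ι n (a * b) = ι n a * ι n b)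
    (hinj : ∀ n : ℕ, Function.Injective (ι n))
    (hexhaust : ∀ x : A, ∃ (n : ℕ) (a : GA F n), ι n a = x)
    (hstar : ∀ (n : ℕ) (g : GLn F n),
      star (ι n (MonoidAlgebra.single g 1)) = ι n (MonoidAlgebra.single g⁻¹ 1))
    (χ : A →ₗ[ℂ] ℂ)
    (hextreme : IsExtremeTrace χ)
    (hunip : ∀ n : ℕ, IsUnipotentFunctional F (fun a => χ (ι n a)))
    (hnorm : χ (ι 0 1) = 1)
    {n m : ℕ} (hn : 1 ≤ n) (hm : 1 ≤ m) (a : GLn F n) (b : GLn F m)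
    (hcoprime : IsCoprime (Matrix.charpoly (a : Matrix (Fin n) (Fin n) F))
      (Matrix.charpoly (b : Matrix (Fin m) (Fin m) F))) :
    χ (ι (n + m) (MonoidAlgebra.single (blockDiagGL F a b) 1))
      = χ (ι n (MonoidAlgebra.single a 1)) * χ (ι m (MonoidAlgebra.single b 1)) := by
  have hι : IsParabolicLimit ι :=
    { map_paraEmb := fun k => LinearMap.congr_fun (hcomp k)
      map_mul := hmul
      injective := hinj
      exists_apply_eq := hexhaust
      star_map_single := hstar }
  have hf := hι.isExtremeCoherentTrace hextreme hnorm
  calc χ (ι (n + m) (MonoidAlgebra.single (blockDiagGL F a b) 1))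
      = χ (ι (n + m) (MonoidAlgebra.single a 1 ⊚ MonoidAlgebra.single b 1)) :=
        hf.map_single_blockDiagGL hcoprime
    _ = χ (ι n (MonoidAlgebra.single a 1)) * χ (ι m (MonoidAlgebra.single b 1)) :=
        hf.map_parabolicMul hunip _ _
end

section
/- For every n ≥ 0, the map j_n : ℂ[GL(n,q)] → ℂ[GL(n+1,q)], defined by j_n(e_g) = q^{−n}·Σ_{h ∈ Ext_U(g)} e_h, is an injective homomorphism of (non-unital) ℂ-algebras: it is linear, injective, and satisfies j_n(a·b) = j_n(a)·j_n(b) for all a, b ∈ ℂ[GL(n,q)]. (The embedding underlying the realization of A(GLU) as an inductive limit of group algebras, Section 7.) -/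
/-!
STATEMENT 4: the embedding `j_n : ℂ[GL(n,q)] → ℂ[GL(n+1,q)]` is an injective homomorphism
of (non-unital) ℂ-algebras (the embedding underlying the realization of A(GLU) as an
inductive limit of group algebras, Section 7).
-/

variable (F : Type) [Field F] [Fintype F] [DecidableEq F]

open scoped Classical in
/-- `Ext_U(g)`: the set of `h ∈ GL(n+1,q)` whose top-left `n × n` corner is `g` and whose last
row is `(0,...,0,1)`. -/
noncomputable def ExtUSet {n : ℕ} (g : GLn F n) : Finset (GLn F (n + 1)) :=
  Finset.univ.filter (fun h =>
    (∀ i j : Fin n, (h : Matrix (Fin (n + 1)) (Fin (n + 1)) F) i.castSucc j.castSucc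
        = (g : Matrix (Fin n) (Fin n) F) i j) ∧
    (∀ j : Fin n, (h : Matrix (Fin (n + 1)) (Fin (n + 1)) F) (Fin.last n) j.castSucc = 0) ∧
    (h : Matrix (Fin (n + 1)) (Fin (n + 1)) F) (Fin.last n) (Fin.last n) = 1)

/-- The embedding `j_n : ℂ[GL(n,q)] → ℂ[GL(n+1,q)]`,
`e_g ↦ q^{-n} ∑_{h ∈ Ext_U(g)} e_h`, as a linear map. -/
noncomputable def paraEmbU (n : ℕ) : GA F n →ₗ[ℂ] GA F (n + 1) :=
  (Finsupp.lsum ℂ (fun g => LinearMap.toSpanSingleton ℂ (GA F (n + 1))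
    (((Fintype.card F : ℂ) ^ n)⁻¹ • ∑ h ∈ ExtUSet F g, MonoidAlgebra.single h (1 : ℂ)))) ∘ₗ
    (MonoidAlgebra.coeffLinearEquiv ℂ).toLinearMap

/-!
Let `U` be the group of unipotent matrices `[[1, v], [0, 1]]` and embed `GL(n,q)` block diagonally
by `s`. Then `Ext_U(g)` is the coset `U * s g`, so `j_n` is `a ↦ e * s(a)`, where `e` is the average
of `U`. It is multiplicative because `e` is idempotent and `s g` normalizes `U`, hence commutes with
`e`; it is injective because `U` and the image of `s` meet trivially, so that the coefficient of
`j_n(a)` at `s g` is `|U|⁻¹` times that of `a` at `g`.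
-/

open Matrix MonoidAlgebra

section AverageEmbedding

variable {G H N : Type*} [Monoid G] [Monoid H] [Group N] [Fintype N]
variable (k : Type*) [CommSemiring k] [Invertible (Fintype.card N : k)]

theorem isIdempotentElem_average : IsIdempotentElem (GroupAlgebra.average k N) := by
  have card_smul : ⅟(Fintype.card N : k) • (Fintype.card N • GroupAlgebra.average k N) =
      GroupAlgebra.average k N := by
    rw [← Nat.cast_smul_eq_nsmul k, invOf_smul_smul]
  rw [IsIdempotentElem]
  nth_rw 1 [GroupAlgebra.average]
  simpa [Finset.sum_mul] using card_smul

/-- The average of the image of a finite group `N` in `H`, as an element of `k[H]`: the idempotent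
`|N|⁻¹ ∑ x, e_{u x}`. -/
noncomputable def imageAverage (u : N →* H) : k[H] :=
  mapDomainAlgHom k k u (GroupAlgebra.average k N)

variable (u : N →* H) (s : G →* H)

theorem imageAverage_eq_smul_sum :
    imageAverage k u = ⅟(Fintype.card N : k) • ∑ x, single (u x) (1 : k) := by
  simp [imageAverage, GroupAlgebra.average]

theorem isIdempotentElem_imageAverage : IsIdempotentElem (imageAverage k u) :=
  (isIdempotentElem_average k).map _

variable {u} in
theorem commute_single_imageAverage {h : H} {σ : Equiv.Perm N}
    (hσ : ∀ x, h * u x = u (σ x) * h) (c : k) : Commute (single h c) (imageAverage k u) := by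
  rw [imageAverage_eq_smul_sum]
  refine Commute.smul_right ?_ _
  simp only [Commute, SemiconjBy, Finset.mul_sum, Finset.sum_mul, single_mul_single, mul_one,
    one_mul, hσ]
  exact Equiv.sum_comp σ fun x => single (u x * h) c

/-- The map `k[G] → k[H]` sending `e_g` to the average of the `e_{u x * s g}` over `x : N`,
encoded as `e_g ↦ e_{s g}` followed by left multiplication by `imageAverage k u`. -/
noncomputable def averagedMap : k[G] →ₗ[k] k[H] :=
  LinearMap.mulLeft k (imageAverage k u) ∘ₗ (mapDomainAlgHom k k s).toLinearMap

theorem averagedMap_apply (a : k[G]) :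
    averagedMap k u s a = imageAverage k u * mapDomainAlgHom k k s a :=
  rfl

theorem averagedMap_single (g : G) (c : k) :
    averagedMap k u s (single g c) = ⅟(Fintype.card N : k) • ∑ x, single (u x * s g) c := by
  simp [averagedMap_apply, imageAverage_eq_smul_sum, Finset.sum_mul]

variable {u s}

theorem averagedMap_mul (hnorm : ∀ g, ∃ σ : Equiv.Perm N, ∀ x, s g * u x = u (σ x) * s g)
    (a b : k[G]) : averagedMap k u s (a * b) = averagedMap k u s a * averagedMap k u s b := by
  have hcomm : Commute (mapDomainAlgHom k k s a) (imageAverage k u) := by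
    induction a using MonoidAlgebra.induction_linear with
    | zero => simp
    | add a a' ha ha' => rw [map_add]; exact ha.add_left ha'
    | single g c =>
      obtain ⟨σ, hσ⟩ := hnorm g
      simpa using commute_single_imageAverage k hσ c
  simp only [averagedMap_apply, map_mul]
  rw [hcomm.mul_mul_mul_comm, (isIdempotentElem_imageAverage k u).eq]

theorem coeff_averagedMap (hinj : Function.Injective fun p : N × G => u p.1 * s p.2)
    (a : k[G]) (g : G) :
    (averagedMap k u s a).coeff (s g) = ⅟(Fintype.card N : k) * a.coeff g := by
  classical
  induction a using MonoidAlgebra.induction_linear with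
  | zero => simp
  | add a b ha hb => simp [ha, hb, mul_add]
  | single g' c =>
    have hiff (x : N) : u x * s g' = s g ↔ x = 1 ∧ g' = g := by
      simpa using hinj.eq_iff (a := (x, g')) (b := (1, g))
    simp [averagedMap_single, Finsupp.single_apply, hiff, ite_and]

theorem averagedMap_injective (hinj : Function.Injective fun p : N × G => u p.1 * s p.2) :
    Function.Injective (averagedMap k u s) := by
  intro a b hab
  ext g
  have hcoeff := congr_arg (fun c => c.coeff (s g)) hab
  simp only [coeff_averagedMap k hinj] at hcoeff
  exact (isUnit_of_invertible (⅟(Fintype.card N : k))).mul_left_cancel hcoeff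

end AverageEmbedding

theorem card_matrix (m n α : Type*) [Fintype m] [DecidableEq m] [Fintype n] [DecidableEq n]
    [Fintype α] :
    Fintype.card (Matrix m n α) = Fintype.card α ^ (Fintype.card m * Fintype.card n) := by
  rw [← Fintype.card_congr Matrix.of, Fintype.card_fun, Fintype.card_fun, ← pow_mul,
    mul_comm (Fintype.card n)]

instance invertibleCardMultiplicativeMatrix (k m n α : Type*) [CommSemiring k] [Fintype m]
    [DecidableEq m] [Fintype n] [DecidableEq n] [Fintype α] [Invertible (Fintype.card α : k)] :
    Invertible (Fintype.card (Multiplicative (Matrix m n α)) : k) :=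
  (invertiblePow (Fintype.card α : k) (Fintype.card m * Fintype.card n)).copy _ <| by
    rw [Fintype.card_multiplicative, card_matrix, Nat.cast_pow]

section BlockDiagonal

variable {R ι κ μ : Type*} [Semiring R] [Fintype ι] [DecidableEq ι]

/-- Left multiplication by an invertible matrix, as a permutation of the rectangular matrices.
On the unipotent matrices `[[1, X], [0, 1]]` it becomes conjugation by `[[g, 0], [0, 1]]`. -/
def mulLeftPerm (g : GL ι R) : Equiv.Perm (Multiplicative (Matrix ι κ R)) where
  toFun X := .ofAdd ((g : Matrix ι ι R) * X.toAdd)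
  invFun X := .ofAdd ((↑g⁻¹ : Matrix ι ι R) * X.toAdd)
  left_inv X := by simp [← Matrix.mul_assoc]
  right_inv X := by simp [← Matrix.mul_assoc]

variable [Fintype κ] [DecidableEq κ] [Fintype μ] [DecidableEq μ] (e : ι ⊕ κ ≃ μ)

/-- The block diagonal embedding `g ↦ [[g, 0], [0, 1]]` of `GL ι R` into `GL μ R`, where `e` splits
the index type `μ` into two blocks. -/
def blockDiagHom : GL ι R →* GL μ R :=
  Units.map
    { toFun := fun A => reindexRingEquiv R e (fromBlocks A 0 0 1)
      map_one' := by rw [fromBlocks_one, map_one]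
      map_mul' := fun A B => by rw [← map_mul, fromBlocks_multiply]; simp }

theorem coe_blockDiagHom (g : GL ι R) :
    (blockDiagHom e g : Matrix μ μ R) = reindexRingEquiv R e (fromBlocks g 0 0 1) :=
  rfl

end BlockDiagonal

section BlockTriangular

variable {R ι κ μ : Type*} [Ring R] [Fintype ι] [DecidableEq ι] [Fintype κ] [DecidableEq κ]
  [Fintype μ] [DecidableEq μ] (e : ι ⊕ κ ≃ μ)

/-- The embedding `X ↦ [[1, X], [0, 1]]` of the additive group of `ι × κ` matrices into `GL μ R`,
where `e` splits the index type `μ` into two blocks. -/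
def blockUnipotentHom : Multiplicative (Matrix ι κ R) →* GL μ R :=
  MonoidHom.toHomUnits
    { toFun := fun X => reindexRingEquiv R e (fromBlocks 1 X.toAdd 0 1)
      map_one' := by rw [toAdd_one, fromBlocks_one, map_one]
      map_mul' := fun X Y => by rw [← map_mul, fromBlocks_multiply]; simp [add_comm] }

theorem coe_blockUnipotentHom (X : Multiplicative (Matrix ι κ R)) :
    (blockUnipotentHom e X : Matrix μ μ R) = reindexRingEquiv R e (fromBlocks 1 X.toAdd 0 1) :=
  rfl

theorem coe_blockUnipotentHom_mul_blockDiagHom (X : Multiplicative (Matrix ι κ R)) (g : GL ι R) :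
    (↑(blockUnipotentHom e X * blockDiagHom e g) : Matrix μ μ R) =
      reindexRingEquiv R e (fromBlocks ↑g X.toAdd 0 1) := by
  rw [Units.val_mul, coe_blockUnipotentHom, coe_blockDiagHom, ← map_mul, fromBlocks_multiply]
  simp

theorem blockDiagHom_mul_blockUnipotentHom (g : GL ι R) (X : Multiplicative (Matrix ι κ R)) :
    blockDiagHom e g * blockUnipotentHom e X =
      blockUnipotentHom e (.ofAdd ((g : Matrix ι ι R) * X.toAdd)) * blockDiagHom e g := by
  ext1
  rw [coe_blockUnipotentHom_mul_blockDiagHom, Units.val_mul, coe_blockUnipotentHom,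
    coe_blockDiagHom, ← map_mul, fromBlocks_multiply]
  simp

theorem blockUnipotentHom_mul_blockDiagHom_injective :
    Function.Injective fun p : Multiplicative (Matrix ι κ R) × GL ι R =>
      blockUnipotentHom e p.1 * blockDiagHom e p.2 := by
  rintro ⟨X, g⟩ ⟨Y, h⟩ heq
  have hval := congr_arg Units.val heq
  simp only [coe_blockUnipotentHom_mul_blockDiagHom, EmbeddingLike.apply_eq_iff_eq,
    fromBlocks_inj] at hval
  exact Prod.ext hval.2.1 (Units.ext hval.1)

variable (k : Type*) [CommSemiring k] [Fintype R] [Invertible (Fintype.card R : k)]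

/-- The map `k[GL ι R] → k[GL μ R]` sending `e_g` to the average of the basis elements
`e_h` over the block triangular matrices `h = [[g, X], [0, 1]]`; for `ι = Fin n`, `κ = Fin 1`,
`μ = Fin (n + 1)`, `k = ℂ` and `R` a finite field this is the embedding `j_n`. -/
noncomputable def blockAveragedMap : k[GL ι R] →ₗ[k] k[GL μ R] :=
  averagedMap k (blockUnipotentHom e) (blockDiagHom e)

theorem paraEmbU_injective_and_multiplicative_general :
    Function.Injective (blockAveragedMap (R := R) e k) ∧
    ∀ a b : k[GL ι R],
      blockAveragedMap e k (a * b) = blockAveragedMap e k a * blockAveragedMap e k b :=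
  ⟨averagedMap_injective k (blockUnipotentHom_mul_blockDiagHom_injective e),
    averagedMap_mul k fun g => ⟨mulLeftPerm g, blockDiagHom_mul_blockUnipotentHom e g⟩⟩

end BlockTriangular

theorem mem_ExtUSet_iff {n : ℕ} {g : GLn F n} {h : GLn F (n + 1)} :
    h ∈ ExtUSet F g ↔ ∃ X : Multiplicative (Matrix (Fin n) (Fin 1) F),
      blockUnipotentHom finSumFinEquiv X * blockDiagHom finSumFinEquiv g = h := by
  have hlast : Fin.natAdd n (0 : Fin 1) = Fin.last n := rfl
  set M := h.val.submatrix finSumFinEquiv finSumFinEquiv with hM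
  have hblock (X : Multiplicative (Matrix (Fin n) (Fin 1) F)) :
      blockUnipotentHom finSumFinEquiv X * blockDiagHom finSumFinEquiv g = h ↔
        fromBlocks ↑g X.toAdd 0 1 = M := by
    rw [Units.ext_iff, coe_blockUnipotentHom_mul_blockDiagHom, ← RingEquiv.eq_symm_apply]
    rfl
  calc h ∈ ExtUSet F g
    _ ↔ M.toBlocks₁₁ = g ∧ M.toBlocks₂₁ = 0 ∧ M.toBlocks₂₂ = 1 := by
      simp [ExtUSet, hM, ← Matrix.ext_iff, toBlocks₁₁, toBlocks₂₁, toBlocks₂₂, Fin.castSucc,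
        hlast]
    _ ↔ ∃ X : Multiplicative (Matrix (Fin n) (Fin 1) F),
        blockUnipotentHom finSumFinEquiv X * blockDiagHom finSumFinEquiv g = h := by
      simp [hblock, ext_iff_blocks, eq_comm]

theorem ExtUSet_eq_map {n : ℕ} (g : GLn F n) :
    ExtUSet F g = Finset.univ.map
      ⟨fun X : Multiplicative (Matrix (Fin n) (Fin 1) F) =>
        blockUnipotentHom finSumFinEquiv X * blockDiagHom finSumFinEquiv g,
        (blockUnipotentHom_mul_blockDiagHom_injective finSumFinEquiv).comp
          (Prod.mk_left_injective g)⟩ := by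
  ext h
  simp [mem_ExtUSet_iff]

theorem paraEmbU_eq_blockAveragedMap (n : ℕ) [Invertible (Fintype.card F : ℂ)] :
    paraEmbU F n = blockAveragedMap finSumFinEquiv ℂ := by
  ext g : 2
  simp [paraEmbU, blockAveragedMap, averagedMap_single, ExtUSet_eq_map, card_matrix]

/-- **The embedding `j_n` is an injective (non-unital) algebra homomorphism**: the linear
map `j_n` is injective and multiplicative. -/
theorem paraEmbU_injective_and_multiplicative (n : ℕ) :
    Function.Injective (paraEmbU F n) ∧
    ∀ a b : GA F n, paraEmbU F n (a * b) = paraEmbU F n a * paraEmbU F n b := by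
  have : Invertible (Fintype.card F : ℂ) :=
    invertibleOfNonzero (Nat.cast_ne_zero.mpr Fintype.card_ne_zero)
  rw [paraEmbU_eq_blockAveragedMap]
  exact paraEmbU_injective_and_multiplicative_general finSumFinEquiv ℂ
end

section
/- Let 0 ≤ n ≤ k, identify F_q^ℓ (for ℓ ≤ k) with the span of the first ℓ standard basis vectors of F_q^k, fix a subspace Y ⊆ F_q^n, and fix integers d_n ≤ d_{n+1} ≤ ... ≤ d_k with d_n = dim Y and d_ℓ − d_{ℓ−1} ∈ {0,1} for n < ℓ ≤ k. Then the number of subspaces Z ⊆ F_q^k satisfying Z ∩ F_q^n = Y and dim(Z ∩ F_q^ℓ) = d_ℓ for all n ≤ ℓ ≤ k equals q^{Σ_{ℓ=n+1}^k ℓ·(d_ℓ − d_{ℓ−1}) − (d_k(d_k+1)/2 − d_n(d_n+1)/2)}. (The counting formula for the constant M established in the proof of Theorem 5.11.) -/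
variable (F : Type) [Field F] [Fintype F] [DecidableEq F]

/-- The coordinate subspace `V_i ⊆ F_q^n` spanned by the first `i` standard basis vectors
(the functions vanishing on the coordinates of index `≥ i`). -/
def coordSub (n : ℕ) (i : ℕ) : Submodule F (Fin n → F) where
  carrier := {v | ∀ j : Fin n, i ≤ (j : ℕ) → v j = 0}
  add_mem' := by
    intro a b ha hb j hj
    simp [ha j hj, hb j hj]
  zero_mem' := by
    intro j hj
    rfl
  smul_mem' := by
    intro c v hv j hj
    simp [hv j hj]

/-! Truncation `Z ↦ Z ⊓ V m` builds `Z` one step of the flag at a time. Over a truncation `W` with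
`dim W = d m`, the subspaces of `V (m + 1)` of the same dimension reduce to `W` itself, while those
of dimension `d m + 1` correspond to the complements of the hyperplane `V m / W` in `V (m + 1) / W`.
A hyperplane `p` has `q ^ dim p` complements, so a jump `d ℓ = d (ℓ - 1) + 1` contributes the factor
`q ^ (ℓ - d ℓ)`, where `d ℓ` runs through `d n + 1, …, d k` as `ℓ` runs through the jumps. -/

open Module

theorem finrank_map_mkQ {K E : Type*} [DivisionRing K] [AddCommGroup E] [Module K E]
    [FiniteDimensional K E] {W H : Submodule K E} (hWH : W ≤ H) :
    finrank K (H.map W.mkQ) = finrank K H - finrank K W := by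
  have third_iso := (Submodule.quotientQuotientEquivQuotient W H hWH).finrank_eq
  have := (H.map W.mkQ).finrank_quotient_add_finrank
  have := H.finrank_quotient_add_finrank
  have := W.finrank_quotient_add_finrank
  omega

section RelativeComplements

variable {K E : Type*} [Field K] [AddCommGroup E] [Module K E] [FiniteDimensional K E]

-- Complements of `p` are the kernels of the projections onto `p`, and these form a fibre of the
-- surjective restriction map `Hom(E, p) → Hom(p, p)`.
theorem natCard_isCompl (p : Submodule K E) :
    Nat.card {q : Submodule K E // IsCompl p q} =
      Nat.card K ^ ((finrank K E - finrank K p) * finrank K p) := by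
  let restr : (E →ₗ[K] p) →ₗ[K] (p →ₗ[K] p) := LinearMap.domRestrict' p
  have restr_surjective : Function.Surjective restr := LinearMap.exists_extend
  have fiber_eq : {f : E →ₗ[K] p | ∀ x : p, f x = x} = restr ⁻¹' {LinearMap.id} := by
    ext f
    exact (LinearMap.ext_iff (f := restr f) (g := LinearMap.id)).symm
  have finrank_ker : finrank K restr.ker = (finrank K E - finrank K p) * finrank K p := by
    have rank_nullity := restr.finrank_range_add_finrank_ker
    rw [LinearMap.range_eq_top.2 restr_surjective, finrank_top, finrank_linearMap,
      finrank_linearMap] at rank_nullity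
    rw [Nat.sub_mul]
    omega
  calc Nat.card {q : Submodule K E // IsCompl p q}
      = Nat.card (restr ⁻¹' {LinearMap.id}) :=
        Nat.card_congr (p.isComplEquivProj.trans (Equiv.setCongr fiber_eq))
    _ = Nat.card restr.ker :=
        Nat.card_congr
          (AddMonoidHom.fiberEquivKerOfSurjective (f := restr.toAddMonoidHom) restr_surjective _)
    _ = Nat.card K ^ ((finrank K E - finrank K p) * finrank K p) := by
        rw [natCard_eq_pow_finrank (K := K), finrank_ker]

theorem natCard_inf_eq_and_codisjoint {W H : Submodule K E} (hWH : W ≤ H) :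
    Nat.card {Z : Submodule K E // H ⊓ Z = W ∧ Codisjoint H Z} =
      Nat.card K ^ ((finrank K E - finrank K H) * (finrank K H - finrank K W)) := by
  let e := W.comapMkQRelIso
  have e_map : e (H.map W.mkQ) = ⟨H, hWH⟩ := e.apply_symm_apply ⟨H, hWH⟩
  have e_isCompl (q : Submodule K (E ⧸ W)) :
      IsCompl (H.map W.mkQ) q ↔ H ⊓ (e q : Submodule K E) = W ∧ Codisjoint H (e q) := by
    rw [e.isCompl_iff, e_map, Set.Ici.isCompl_iff]
  have mem_Ici {Z : Submodule K E} (hZ : H ⊓ Z = W ∧ Codisjoint H Z) : Z ∈ Set.Ici W :=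
    hZ.1.symm.trans_le inf_le_right
  have codim : finrank K (E ⧸ W) - (finrank K H - finrank K W) = finrank K E - finrank K H := by
    have := W.finrank_quotient_add_finrank
    have := Submodule.finrank_mono hWH
    omega
  rw [← codim, ← finrank_map_mkQ hWH, ← natCard_isCompl]
  exact (Nat.card_congr ((e.toEquiv.subtypeEquiv e_isCompl).trans
    (Equiv.subtypeSubtypeEquivSubtype mem_Ici))).symm

theorem natCard_inf_eq_and_sup_eq {W H Q : Submodule K E} (hWH : W ≤ H) (hHQ : H ≤ Q) :
    Nat.card {Z : Submodule K E // H ⊓ Z = W ∧ H ⊔ Z = Q} =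
      Nat.card K ^ ((finrank K Q - finrank K H) * (finrank K H - finrank K W)) := by
  let e := Q.mapIic
  have finrank_symm (P : Set.Iic Q) : finrank K (e.symm P) = finrank K P.1 :=
    (Submodule.comapSubtypeEquivOfLe P.2).finrank_eq
  have e_iff (Z : Submodule K Q) :
      e.symm ⟨H, hHQ⟩ ⊓ Z = e.symm ⟨W, hWH.trans hHQ⟩ ∧ Codisjoint (e.symm ⟨H, hHQ⟩) Z ↔
        H ⊓ (e Z : Submodule K E) = W ∧ H ⊔ (e Z : Submodule K E) = Q := by
    rw [← e.injective.eq_iff, map_inf, ← codisjoint_map_orderIso_iff (f := e)]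
    simp only [e.apply_symm_apply, Set.Iic.codisjoint_iff, Subtype.ext_iff]
    rfl
  have mem_Iic {Z : Submodule K E} (hZ : H ⊓ Z = W ∧ H ⊔ Z = Q) : Z ∈ Set.Iic Q :=
    le_sup_right.trans_eq hZ.2
  have count := natCard_inf_eq_and_codisjoint
    (e.symm.monotone (a := ⟨W, hWH.trans hHQ⟩) (b := ⟨H, hHQ⟩) hWH)
  rw [finrank_symm, finrank_symm] at count
  rw [← count]
  exact (Nat.card_congr ((e.toEquiv.subtypeEquiv e_iff).trans
    (Equiv.subtypeSubtypeEquivSubtype mem_Iic))).symm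

theorem natCard_extensions_of_finrank_eq_succ {W H Q : Submodule K E} (hWH : W ≤ H) (hHQ : H ≤ Q)
    (hQ : finrank K Q = finrank K H + 1) {r : ℕ} (hWr : finrank K W ≤ r)
    (hrW : r ≤ finrank K W + 1) :
    Nat.card {Z : Submodule K E // Z ≤ Q ∧ Z ⊓ H = W ∧ finrank K Z = r} =
      Nat.card K ^ ((r - finrank K W) * (finrank K H - finrank K W)) := by
  obtain rfl | rfl : r = finrank K W ∨ r = finrank K W + 1 := by omega
  · have unique (Z : Submodule K E) :
        Z ≤ Q ∧ Z ⊓ H = W ∧ finrank K Z = finrank K W ↔ Z = W := by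
      constructor
      · rintro ⟨-, hZW, hZr⟩
        exact (Submodule.eq_of_le_of_finrank_eq (hZW.symm.trans_le inf_le_left) hZr.symm).symm
      · rintro rfl
        exact ⟨hWH.trans hHQ, inf_eq_left.2 hWH, rfl⟩
    simp only [unique, Nat.card_unique, Nat.sub_self, Nat.zero_mul, pow_zero]
  · have isCompl_iff (Z : Submodule K E) :
        Z ≤ Q ∧ Z ⊓ H = W ∧ finrank K Z = finrank K W + 1 ↔ H ⊓ Z = W ∧ H ⊔ Z = Q := by
      have dim_formula := Submodule.finrank_sup_add_finrank_inf_eq H Z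
      rw [inf_comm Z H]
      constructor
      · rintro ⟨hZQ, rfl, hZr⟩
        exact ⟨rfl, Submodule.eq_of_le_of_finrank_eq (sup_le hHQ hZQ) (by omega)⟩
      · rintro ⟨rfl, rfl⟩
        exact ⟨le_sup_right, rfl, by omega⟩
    have codim_eq_one : finrank K Q - finrank K H = 1 := by omega
    simp only [isCompl_iff, natCard_inf_eq_and_sup_eq hWH hHQ, codim_eq_one,
      Nat.add_sub_cancel_left]

end RelativeComplements

section FlagExtensions

variable {R M : Type*} [Semiring R] [AddCommMonoid M] [Module R M]

/-- For a flag `V` of subspaces and a subspace `Y` of `V n`, the subspaces `Z ≤ V m` extending `Y`,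
in the sense that `Z ⊓ V n = Y`, and having dimension sequence `dim (Z ⊓ V ℓ) = d ℓ` for
`n ≤ ℓ ≤ m`. -/
def flagExtensions (V : ℕ → Submodule R M) (Y : Submodule R M) (d : ℕ → ℕ) (n m : ℕ) :
    Set (Submodule R M) :=
  {Z | Z ≤ V m ∧ Z ⊓ V n = Y ∧ ∀ ℓ, n ≤ ℓ → ℓ ≤ m → finrank R ↥(Z ⊓ V ℓ) = d ℓ}

variable {V : ℕ → Submodule R M} {Y : Submodule R M} {d : ℕ → ℕ} {n m : ℕ}

theorem finrank_of_mem_flagExtensions (hnm : n ≤ m) {Z : Submodule R M}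
    (hZ : Z ∈ flagExtensions V Y d n m) : finrank R Z = d m := by
  obtain ⟨hZV, -, hdim⟩ := hZ
  rw [← hdim m hnm le_rfl, inf_eq_left.2 hZV]

theorem flagExtensions_self (hY : Y ≤ V n) (hdn : d n = finrank R Y) :
    flagExtensions V Y d n n = {Y} := by
  ext Z
  constructor
  · rintro ⟨hZV, hZY, -⟩
    exact (inf_eq_left.2 hZV).symm.trans hZY
  · rintro rfl
    refine ⟨hY, inf_eq_left.2 hY, fun ℓ hnℓ hℓn => ?_⟩
    rw [le_antisymm hℓn hnℓ, inf_eq_left.2 hY, hdn]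

theorem mem_flagExtensions_succ_iff (hV : Monotone V) (hnm : n ≤ m) {Z : Submodule R M} :
    Z ∈ flagExtensions V Y d n (m + 1) ↔
      Z ⊓ V m ∈ flagExtensions V Y d n m ∧ Z ≤ V (m + 1) ∧ finrank R Z = d (m + 1) := by
  have inf_inf_eq {ℓ : ℕ} (hℓm : ℓ ≤ m) : Z ⊓ V m ⊓ V ℓ = Z ⊓ V ℓ := by
    rw [inf_assoc, inf_eq_right.2 (hV hℓm)]
  constructor
  · intro hZ
    refine ⟨⟨inf_le_right, (inf_inf_eq hnm).trans hZ.2.1, fun ℓ hnℓ hℓm => ?_⟩, hZ.1,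
      finrank_of_mem_flagExtensions (by omega) hZ⟩
    rw [inf_inf_eq hℓm, hZ.2.2 ℓ hnℓ (by omega)]
  · rintro ⟨⟨-, hY, hdim⟩, hZV, hZd⟩
    refine ⟨hZV, (inf_inf_eq hnm).symm.trans hY, fun ℓ hnℓ hℓm => ?_⟩
    obtain hℓm | rfl := Nat.le_succ_iff.1 hℓm
    · rw [← inf_inf_eq hℓm, hdim ℓ hnℓ hℓm]
    · rw [inf_eq_left.2 hZV, hZd]

/-- Truncation at `V m` fibres the extensions in `V (m + 1)` over those in `V m`. -/
def flagExtensionsSuccEquivSigma (hV : Monotone V) (hnm : n ≤ m) :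
    flagExtensions V Y d n (m + 1) ≃
      Σ W : flagExtensions V Y d n m,
        {Z : Submodule R M // Z ≤ V (m + 1) ∧ Z ⊓ V m = W ∧ finrank R Z = d (m + 1)} where
  toFun Z :=
    have hZ := (mem_flagExtensions_succ_iff hV hnm).1 Z.2
    ⟨⟨Z ⊓ V m, hZ.1⟩, Z, hZ.2.1, rfl, hZ.2.2⟩
  invFun Z := ⟨Z.2, (mem_flagExtensions_succ_iff hV hnm).2
    ⟨Z.2.2.2.1.symm ▸ Z.1.2, Z.2.2.1, Z.2.2.2.2⟩⟩
  left_inv _ := rfl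
  right_inv := by
    rintro ⟨⟨W, hW⟩, Z, hZV, hZW, hZd⟩
    change Z ⊓ V m = W at hZW
    subst hZW
    rfl

end FlagExtensions

section FlagExtensionCounts

variable {K E : Type*} [Field K] [Finite K] [AddCommGroup E] [Module K E] [FiniteDimensional K E]
  {V : ℕ → Submodule K E} {Y : Submodule K E} {d : ℕ → ℕ} {n m k : ℕ}

theorem natCard_flagExtensions_succ (hV : Monotone V) (hnm : n ≤ m)
    (hm : finrank K (V m) = m) (hm_succ : finrank K (V (m + 1)) = m + 1)
    (hstep : d m ≤ d (m + 1) ∧ d (m + 1) ≤ d m + 1) :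
    Nat.card (flagExtensions V Y d n (m + 1)) =
      Nat.card (flagExtensions V Y d n m) * Nat.card K ^ ((d (m + 1) - d m) * (m - d m)) := by
  have : Finite E := Module.finite_of_finite K
  have := Fintype.ofFinite (flagExtensions V Y d n m)
  have card_fiber (W : flagExtensions V Y d n m) :
      Nat.card {Z : Submodule K E // Z ≤ V (m + 1) ∧ Z ⊓ V m = W ∧ finrank K Z = d (m + 1)} =
        Nat.card K ^ ((d (m + 1) - d m) * (m - d m)) := by
    have hW := finrank_of_mem_flagExtensions hnm W.2
    rw [natCard_extensions_of_finrank_eq_succ W.2.1 (hV m.le_succ) (by rw [hm, hm_succ])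
      (hW.trans_le hstep.1) (hstep.2.trans_eq (by rw [hW])), hW, hm]
  rw [Nat.card_congr (flagExtensionsSuccEquivSigma hV hnm), Nat.card_sigma]
  simp only [card_fiber, Finset.sum_const, Finset.card_univ, smul_eq_mul,
    Nat.card_eq_fintype_card (α := flagExtensions V Y d n m)]

theorem natCard_flagExtensions (hV : Monotone V) (hnk : n ≤ k)
    (hdim : ∀ ℓ, n ≤ ℓ → ℓ ≤ k → finrank K (V ℓ) = ℓ) (hY : Y ≤ V n) (hdn : d n = finrank K Y)
    (hstep : ∀ ℓ, n ≤ ℓ → ℓ < k → d ℓ ≤ d (ℓ + 1) ∧ d (ℓ + 1) ≤ d ℓ + 1) :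
    Nat.card (flagExtensions V Y d n k) =
      Nat.card K ^ ∑ ℓ ∈ Finset.Ico n k, (d (ℓ + 1) - d ℓ) * (ℓ - d ℓ) := by
  induction k, hnk using Nat.le_induction with
  | base => simp [flagExtensions_self hY hdn]
  | succ k hnk ih =>
    rw [natCard_flagExtensions_succ hV hnk (hdim k hnk k.le_succ) (hdim (k + 1) (by omega) le_rfl)
      (hstep k hnk k.lt_succ_self), Finset.sum_Ico_succ_top hnk, pow_add,
      ih (fun ℓ hnℓ hℓk => hdim ℓ hnℓ (by omega)) (fun ℓ hnℓ hℓk => hstep ℓ hnℓ (by omega))]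

end FlagExtensionCounts

theorem triangle_add_succ (x : ℕ) : (x + 1) * (x + 1 + 1) / 2 = x * (x + 1) / 2 + (x + 1) := by
  simpa [mul_comm] using Nat.triangle_succ (x + 1)

section DimensionSequences

variable {d : ℕ → ℕ} {n k : ℕ}

theorem le_and_le_self_of_step (hnk : n ≤ k) (hdn : d n ≤ n)
    (hstep : ∀ ℓ, n ≤ ℓ → ℓ < k → d ℓ ≤ d (ℓ + 1) ∧ d (ℓ + 1) ≤ d ℓ + 1) :
    d n ≤ d k ∧ d k ≤ k := by
  induction k, hnk using Nat.le_induction with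
  | base => exact ⟨le_rfl, hdn⟩
  | succ k hnk ih =>
    have := ih fun ℓ hnℓ hℓk => hstep ℓ hnℓ (by omega)
    have := hstep k hnk k.lt_succ_self
    omega

theorem sum_step_mul_codim_add_triangle (hnk : n ≤ k) (hdn : d n ≤ n)
    (hstep : ∀ ℓ, n ≤ ℓ → ℓ < k → d ℓ ≤ d (ℓ + 1) ∧ d (ℓ + 1) ≤ d ℓ + 1) :
    ∑ ℓ ∈ Finset.Ico n k, (d (ℓ + 1) - d ℓ) * (ℓ - d ℓ) + d k * (d k + 1) / 2 =
      ∑ ℓ ∈ Finset.Icc (n + 1) k, ℓ * (d ℓ - d (ℓ - 1)) + d n * (d n + 1) / 2 := by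
  induction k, hnk using Nat.le_induction with
  | base => simp
  | succ k hnk ih =>
    have hstep' : ∀ ℓ, n ≤ ℓ → ℓ < k → d ℓ ≤ d (ℓ + 1) ∧ d (ℓ + 1) ≤ d ℓ + 1 :=
      fun ℓ hnℓ hℓk => hstep ℓ hnℓ (by omega)
    have ih := ih hstep'
    have hdk := (le_and_le_self_of_step hnk hdn hstep').2
    rw [Finset.sum_Ico_succ_top hnk, Finset.sum_Icc_succ_top (by omega), Nat.add_sub_cancel]
    obtain hd | hd : d (k + 1) = d k ∨ d (k + 1) = d k + 1 := by
      have := hstep k hnk k.lt_succ_self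
      omega
    · simp only [hd, Nat.sub_self, Nat.zero_mul, Nat.mul_zero]
      omega
    · simp only [hd, triangle_add_succ, Nat.add_sub_cancel_left, Nat.one_mul, Nat.mul_one]
      omega

theorem sum_step_mul_codim (hnk : n ≤ k) (hdn : d n ≤ n)
    (hstep : ∀ ℓ, n ≤ ℓ → ℓ < k → d ℓ ≤ d (ℓ + 1) ∧ d (ℓ + 1) ≤ d ℓ + 1) :
    ∑ ℓ ∈ Finset.Ico n k, (d (ℓ + 1) - d ℓ) * (ℓ - d ℓ) =
      ∑ ℓ ∈ Finset.Icc (n + 1) k, ℓ * (d ℓ - d (ℓ - 1)) -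
        (d k * (d k + 1) / 2 - d n * (d n + 1) / 2) := by
  have balance := sum_step_mul_codim_add_triangle hnk hdn hstep
  have hnd := (le_and_le_self_of_step hnk hdn hstep).1
  have triangle_le : d n * (d n + 1) / 2 ≤ d k * (d k + 1) / 2 := by gcongr
  omega

end DimensionSequences

section CoordinateFlag

variable {K : Type} [Field K] {k : ℕ}

theorem coordSub_monotone : Monotone (coordSub K k) :=
  fun _ _ hij _ hv t ht => hv t (hij.trans ht)

theorem coordSub_self : coordSub K k k = ⊤ :=
  eq_top_iff.2 fun _ _ t ht => absurd t.2 ht.not_gt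

theorem finrank_coordSub {m : ℕ} (hm : m ≤ k) : finrank K (coordSub K k m) = m := by
  let I : Set (Fin k) := {j | (j : ℕ) < m}
  have coordSub_eq : coordSub K k m =
      ⨅ j ∈ Iᶜ, LinearMap.ker (LinearMap.proj j : (Fin k → K) →ₗ[K] K) := by
    ext v
    simp [coordSub, I]
  rw [coordSub_eq, (LinearMap.iInfKerProjEquiv K (fun _ => K) disjoint_compl_right
    (Set.union_compl_self I).ge).finrank_eq, finrank_fintype_fun_eq_card]
  exact Fintype.card_fin_lt_of_le hm

end CoordinateFlag

theorem extension_counting_general {K E : Type*} [Field K] [Finite K] [AddCommGroup E] [Module K E]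
    [FiniteDimensional K E] {V : ℕ → Submodule K E} (hV : Monotone V) {n k : ℕ} (hnk : n ≤ k)
    (hdim : ∀ ℓ, n ≤ ℓ → ℓ ≤ k → finrank K (V ℓ) = ℓ)
    {Y : Submodule K E} (hY : Y ≤ V n) {d : ℕ → ℕ} (hdn : d n = finrank K Y)
    (hstep : ∀ ℓ, n < ℓ → ℓ ≤ k → d (ℓ - 1) ≤ d ℓ ∧ d ℓ ≤ d (ℓ - 1) + 1) :
    Nat.card (flagExtensions V Y d n k) =
      Nat.card K ^ (∑ ℓ ∈ Finset.Icc (n + 1) k, ℓ * (d ℓ - d (ℓ - 1)) -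
        (d k * (d k + 1) / 2 - d n * (d n + 1) / 2)) := by
  have hdn_le : d n ≤ n := by
    rw [hdn, ← hdim n le_rfl hnk]
    exact Submodule.finrank_mono hY
  have hstep_succ (ℓ : ℕ) (hnℓ : n ≤ ℓ) (hℓk : ℓ < k) :
      d ℓ ≤ d (ℓ + 1) ∧ d (ℓ + 1) ≤ d ℓ + 1 := hstep (ℓ + 1) (by omega) hℓk
  rw [natCard_flagExtensions hV hnk hdim hY hdn hstep_succ,
    sum_step_mul_codim hnk hdn_le hstep_succ]

/-- **The counting formula for the constant `M`** established in the proof of Theorem 5.11: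
the number of subspaces `Z ⊆ F_q^k` with prescribed intersection with `F_q^n` and prescribed
intermediate dimensions `dim(Z ∩ F_q^ℓ) = d_ℓ` (`n ≤ ℓ ≤ k`). -/
theorem extension_counting (n k : ℕ) (hnk : n ≤ k)
    (Y : Submodule F (Fin k → F)) (hY : Y ≤ coordSub F k n)
    (d : ℕ → ℕ)
    (hdn : d n = Module.finrank F ↥Y)
    (hstep : ∀ ℓ : ℕ, n < ℓ → ℓ ≤ k → d (ℓ - 1) ≤ d ℓ ∧ d ℓ ≤ d (ℓ - 1) + 1) :
    Nat.card {Z : Submodule F (Fin k → F) //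
        Z ⊓ coordSub F k n = Y ∧
        ∀ ℓ : ℕ, n ≤ ℓ → ℓ ≤ k → Module.finrank F ↥(Z ⊓ coordSub F k ℓ) = d ℓ}
      = (Fintype.card F) ^
          ((∑ ℓ ∈ Finset.Icc (n + 1) k, ℓ * (d ℓ - d (ℓ - 1)))
            - (d k * (d k + 1) / 2 - d n * (d n + 1) / 2)) := by
  rw [← Nat.card_eq_fintype_card, ← extension_counting_general (V := coordSub F k)
    coordSub_monotone hnk (fun _ _ => finrank_coordSub) hY hdn hstep]
  simp only [flagExtensions, coordSub_self, le_top, true_and, Set.coe_ofPred]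
end
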